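/- arXiv:math/0607050 — 7 statements merged into one kernel-verified Lean document; each statement's English description precedes it below -/
import Mathlib

section
/- In the Lyapunov–Perron setting, for every ξ ∈ H_c and every v ∈ C_η⁻ the function N(v, ξ) belongs to C_η⁻; moreover for all v, v̄ ∈ C_η⁻ and all ξ, ξ̄ ∈ H_c one has ‖N(v, ξ) − N(v̄, ξ)‖_η ≤ L·(1/(η+β) − 1/(α+η))·‖v − v̄‖_η and ‖N(v, ξ) − N(v, ξ̄)‖_η ≤ ‖ξ − ξ̄‖. -/
open MeasureTheory Set

/-!
With `Z t = ∫₀ᵗ z`, being in `C_η⁻` with norm at most `K` means growing at most like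
`K e^{ηt + Z t}` as `t → -∞`. If `S` satisfies `‖S(t)‖ ≤ e^{-γt}` and `‖f(τ)‖ ≤ K e^{ητ + Z τ}`,
the variation-of-constants integrand `e^{Z t - Z τ} S(t-τ) f(τ)` is at most
`K e^{ηt + Z t} e^{(γ+η)(τ-t)}`: the values of `Z` at `τ` cancel. As `α + η < 0 < β + η`,
integrating over `τ ≥ t` (center part, `γ = α`) and `τ ≤ t` (stable part, `γ = β`) gives the
factors `-1/(α+η)` and `1/(β+η)`.
-/

section IntegralTools

open Filter Topology Function

variable {E F : Type*} [NormedAddCommGroup E] [NormedSpace ℝ E]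
  [NormedAddCommGroup F] [NormedSpace ℝ F]

theorem continuousOn_clm_apply_of_norm_le {X : Type*} [TopologicalSpace X] {D : Set X}
    {S : X → E →L[ℝ] F} {b : X → ℝ} {f : X → E}
    (hS : ∀ x, ContinuousOn (fun p => S p x) D) (hb : ContinuousOn b D)
    (hSb : ∀ p ∈ D, ∀ x, ‖S p x‖ ≤ b p * ‖x‖) (hf : ContinuousOn f D) :
    ContinuousOn (fun p => S p (f p)) D := by
  intro q hq
  have h_bound : Tendsto (fun p => b p * ‖f p - f q‖) (𝓝[D] q) (𝓝 0) := by
    simpa using (hb q hq).tendsto.mul ((hf q hq).tendsto.sub_const (f q)).norm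
  have h_increment : Tendsto (fun p => S p (f p - f q)) (𝓝[D] q) (𝓝 0) :=
    squeeze_zero_norm' (eventually_mem_nhdsWithin.mono fun p hp => hSb p hp _) h_bound
  simpa [ContinuousWithinAt] using h_increment.add (hS (f q) q hq).tendsto

theorem continuousOn_intervalIntegral_of_continuousOn_triangle {G : ℝ → ℝ → E} {a : ℝ}
    (hG : ContinuousOn (uncurry G) {p | p.1 ≤ p.2 ∧ p.2 ≤ a}) :
    ContinuousOn (fun t => ∫ τ in a..t, G t τ) (Iic a) := by
  -- Precompose with a retraction of the plane onto the triangle.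
  have h_ext : Continuous (uncurry fun t τ => G (min t a) (min (max τ (min t a)) a)) :=
    hG.comp_continuous
      (f := fun p : ℝ × ℝ => (min p.1 a, min (max p.2 (min p.1 a)) a)) (by fun_prop)
      fun p => ⟨le_min (le_max_right _ _) (min_le_right _ _), min_le_right _ _⟩
  have h_int := intervalIntegral.continuous_parametric_intervalIntegral_of_continuous
    (μ := volume) (a₀ := a) h_ext continuous_id
  refine h_int.continuousOn.congr fun t (ht : t ≤ a) =>
    intervalIntegral.integral_congr fun τ hτ => ?_
  rw [uIcc_of_ge ht] at hτ
  simp only [min_eq_left ht, max_eq_left hτ.1, min_eq_left hτ.2]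

theorem setIntegral_Iic_eq_setIntegral_Ici_sub (f : ℝ → E) (t : ℝ) :
    ∫ τ in Iic t, f τ = ∫ r in Ici 0, f (t - r) := by
  have h_preimage : (fun r => t - r) ⁻¹' Iic t = Ici 0 := by ext; simp
  rw [← h_preimage, (Measure.measurePreserving_sub_left volume t).setIntegral_preimage_emb
    (MeasurableEquiv.subLeft t).measurableEmbedding]

theorem continuousOn_setIntegral_Iic_of_norm_le {G : ℝ → ℝ → E} {a : ℝ} {C h : ℝ → ℝ}
    (hG : ContinuousOn (uncurry G) {p | p.2 ≤ p.1 ∧ p.1 ≤ a}) (hC : ContinuousOn C (Iic a))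
    (hh : IntegrableOn h (Ici 0)) (hle : ∀ t ≤ a, ∀ r ≥ 0, ‖G t (t - r)‖ ≤ C t * h r) :
    ContinuousOn (fun t => ∫ τ in Iic t, G t τ) (Iic a) := by
  simp only [setIntegral_Iic_eq_setIntegral_Ici_sub]
  have hG_shift : ContinuousOn (fun p : ℝ × ℝ => G p.1 (p.1 - p.2)) (Iic a ×ˢ Ici 0) :=
    hG.comp (f := fun p : ℝ × ℝ => (p.1, p.1 - p.2)) (by fun_prop)
      fun p hp => ⟨sub_le_self _ hp.2, hp.1⟩
  intro t₀ ht₀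
  refine continuousWithinAt_of_dominated (bound := fun r => (|C t₀| + 1) * |h r|)
    ?_ ?_ (hh.abs.const_mul _) ?_
  · refine eventually_mem_nhdsWithin.mono fun t ht => ?_
    exact (hG_shift.comp (f := fun r => (t, r)) (by fun_prop)
      fun r hr => ⟨ht, hr⟩).aestronglyMeasurable measurableSet_Ici
  · have hC_le : ∀ᶠ t in 𝓝[Iic a] t₀, |C t| ≤ |C t₀| + 1 :=
      (hC t₀ ht₀).abs.tendsto.eventually_le_const (lt_add_one _)
    filter_upwards [hC_le, eventually_mem_nhdsWithin] with t htC ht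
    refine ae_restrict_of_forall_mem measurableSet_Ici fun r hr => ?_
    calc ‖G t (t - r)‖ ≤ |C t * h r| := (hle t ht r hr).trans (le_abs_self _)
      _ = |C t| * |h r| := abs_mul _ _
      _ ≤ (|C t₀| + 1) * |h r| := by gcongr
  · refine ae_restrict_of_forall_mem measurableSet_Ici fun r hr => ?_
    exact hG_shift.comp (f := fun t => (t, r)) (by fun_prop) (fun t ht => ⟨ht, hr⟩) t₀ ht₀

theorem integrableOn_Iic_exp_mul_sub {c : ℝ} (hc : 0 < c) (t : ℝ) :
    IntegrableOn (fun τ => Real.exp (c * (τ - t))) (Iic t) := by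
  simp only [mul_sub, Real.exp_sub]
  exact (integrableOn_exp_mul_Iic hc t).div_const _

theorem integral_Iic_exp_mul_sub {c : ℝ} (hc : 0 < c) (t : ℝ) :
    ∫ τ in Iic t, Real.exp (c * (τ - t)) = 1 / c := by
  simp only [mul_sub, Real.exp_sub, integral_div, integral_exp_mul_Iic hc]
  field_simp

theorem integrableOn_Ioi_exp_mul_sub {c : ℝ} (hc : c < 0) (t : ℝ) :
    IntegrableOn (fun τ => Real.exp (c * (τ - t))) (Ioi t) := by
  simp only [mul_sub, Real.exp_sub]
  exact (integrableOn_exp_mul_Ioi hc t).div_const _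

theorem integral_Ioi_exp_mul_sub {c : ℝ} (hc : c < 0) (t : ℝ) :
    ∫ τ in Ioi t, Real.exp (c * (τ - t)) = -(1 / c) := by
  simp only [mul_sub, Real.exp_sub, integral_div, integral_exp_mul_Ioi hc]
  field_simp

end IntegralTools

section WeightedSpace

variable {E F : Type*} [NormedAddCommGroup E] [NormedAddCommGroup F]

/-- Membership of (the restriction to `(-∞, 0]` of) `v` in the space `C_η⁻` of continuous functions
with finite weighted norm. Only the primitive `Z t = ∫₀ᵗ z` of the coefficient `z` enters. -/
def MemWeighted (η : ℝ) (Z : ℝ → ℝ) (v : ℝ → E) : Prop :=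
  ContinuousOn v (Iic 0) ∧
    BddAbove ((fun t => Real.exp (-η * t - Z t) * ‖v t‖) '' Iic 0)

/-- The norm of `C_η⁻`, with junk value `0` when the weighted function is unbounded. -/
noncomputable def weightedNorm (η : ℝ) (Z : ℝ → ℝ) (v : ℝ → E) : ℝ :=
  sSup ((fun t => Real.exp (-η * t - Z t) * ‖v t‖) '' Iic 0)

/-- The estimate `‖v‖_η ≤ K` in pointwise form, meaningful without assuming that the weighted norm
is finite. -/
def WeightedBound (η : ℝ) (Z : ℝ → ℝ) (K : ℝ) (v : ℝ → E) : Prop :=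
  ∀ t ≤ 0, ‖v t‖ ≤ K * Real.exp (η * t + Z t)

variable {η K K' L : ℝ} {Z : ℝ → ℝ} {u v w : ℝ → E}

theorem weightedBound_iff_mem_upperBounds :
    WeightedBound η Z K v ↔
      K ∈ upperBounds ((fun t => Real.exp (-η * t - Z t) * ‖v t‖) '' Iic 0) := by
  simp only [WeightedBound, mem_upperBounds, forall_mem_image, mem_Iic]
  refine forall₂_congr fun t _ => ?_
  rw [show -η * t - Z t = -(η * t + Z t) by ring, Real.exp_neg,
    inv_mul_le_iff₀' (Real.exp_pos _)]

theorem memWeighted_iff_exists_weightedBound :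
    MemWeighted η Z v ↔ ContinuousOn v (Iic 0) ∧ ∃ K, WeightedBound η Z K v := by
  simp only [MemWeighted, weightedBound_iff_mem_upperBounds, BddAbove, Set.Nonempty]

namespace WeightedBound

theorem weightedNorm_le (hv : WeightedBound η Z K v) : weightedNorm η Z v ≤ K :=
  csSup_le (nonempty_Iic.image _) (weightedBound_iff_mem_upperBounds.1 hv)

theorem nonneg (hv : WeightedBound η Z K v) : 0 ≤ K :=
  nonneg_of_mul_nonneg_left ((norm_nonneg _).trans (hv 0 le_rfl)) (Real.exp_pos _)

theorem congr (hv : WeightedBound η Z K v) (hvw : ∀ t ≤ 0, w t = v t) : WeightedBound η Z K w :=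
  fun t ht => by rw [hvw t ht]; exact hv t ht

theorem add (hu : WeightedBound η Z K u) (hv : WeightedBound η Z K' v) :
    WeightedBound η Z (K + K') fun t => u t + v t := fun t ht =>
  (norm_add_le_of_le (hu t ht) (hv t ht)).trans_eq (add_mul _ _ _).symm

theorem of_norm_le_mul (hL : 0 ≤ L) (hv : WeightedBound η Z K v) {f : ℝ → F}
    (hf : ∀ t ≤ 0, ‖f t‖ ≤ L * ‖v t‖) : WeightedBound η Z (L * K) f := fun t ht =>
  calc ‖f t‖ ≤ L * ‖v t‖ := hf t ht
    _ ≤ L * (K * Real.exp (η * t + Z t)) := by gcongr; exact hv t ht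
    _ = L * K * Real.exp (η * t + Z t) := (mul_assoc _ _ _).symm

theorem toLp_prod {p : ENNReal} [Fact (1 ≤ p)] {f : ℝ → F}
    (hv : WeightedBound η Z K v) (hf : WeightedBound η Z K' f) :
    WeightedBound η Z (K + K') fun t => WithLp.toLp p (v t, f t) := fun t ht => by
  have h_split : WithLp.toLp p (v t, f t) = WithLp.toLp p (v t, 0) + WithLp.toLp p (0, f t) := by
    rw [← WithLp.toLp_add, Prod.mk_add_mk, add_zero, zero_add]
  simp only [h_split, add_mul]
  refine norm_add_le_of_le ?_ ?_
  · exact (WithLp.norm_toLp_fst p E F (v t)).trans_le (hv t ht)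
  · exact (WithLp.norm_toLp_snd p E F (f t)).trans_le (hf t ht)

end WeightedBound

namespace MemWeighted

theorem weightedBound (hv : MemWeighted η Z v) : WeightedBound η Z (weightedNorm η Z v) v :=
  weightedBound_iff_mem_upperBounds.2 fun _ hx => le_csSup hv.2 hx

theorem sub (hv : MemWeighted η Z v) (hw : MemWeighted η Z w) :
    MemWeighted η Z fun t => v t - w t := by
  have hw_neg : WeightedBound η Z (weightedNorm η Z w) fun t => -w t := fun t ht =>
    (norm_neg (w t)).trans_le (hw.weightedBound t ht)
  refine memWeighted_iff_exists_weightedBound.2 ⟨hv.1.sub hw.1,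
    weightedNorm η Z v + weightedNorm η Z w, ?_⟩
  simpa only [sub_eq_add_neg] using hv.weightedBound.add hw_neg

end MemWeighted

end WeightedSpace

section Duhamel

open Function

variable {E : Type*} [NormedAddCommGroup E] [NormedSpace ℝ E]

/-- A strongly continuous family of operators with the exponential estimate `‖S t‖ ≤ e^{-γt}` for
`t ∈ s`; the center group has this on `Iic 0` and the stable semigroup on `Ici 0`. -/
structure IsExpBoundedOn (S : ℝ → E →L[ℝ] E) (γ : ℝ) (s : Set ℝ) : Prop where
  continuousOn_apply : ∀ x, ContinuousOn (fun t => S t x) s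
  norm_apply_le : ∀ t ∈ s, ∀ x, ‖S t x‖ ≤ Real.exp (-γ * t) * ‖x‖

/-- The variation-of-constants integrand `e^{∫_τ^t z} S(t-τ) f(τ)`, where `Z` is a primitive
of `z`. -/
noncomputable def duhamelIntegrand (S : ℝ → E →L[ℝ] E) (Z : ℝ → ℝ) (f : ℝ → E) (t τ : ℝ) : E :=
  Real.exp (Z t - Z τ) • S (t - τ) (f τ)

/-- The center component of the Lyapunov–Perron map, without its boundary term. -/
noncomputable def centerDuhamel (S : ℝ → E →L[ℝ] E) (Z : ℝ → ℝ) (f : ℝ → E) (t : ℝ) : E :=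
  ∫ τ in (0 : ℝ)..t, duhamelIntegrand S Z f t τ

/-- The stable component of the Lyapunov–Perron map. -/
noncomputable def stableDuhamel (S : ℝ → E →L[ℝ] E) (Z : ℝ → ℝ) (f : ℝ → E) (t : ℝ) : E :=
  ∫ τ in Iic t, duhamelIntegrand S Z f t τ

variable {S : ℝ → E →L[ℝ] E} {γ η K : ℝ} {s : Set ℝ} {Z : ℝ → ℝ} {f g : ℝ → E}

theorem duhamelIntegrand_sub (t τ : ℝ) :
    duhamelIntegrand S Z (fun τ => f τ - g τ) t τ =
      duhamelIntegrand S Z f t τ - duhamelIntegrand S Z g t τ := by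
  simp only [duhamelIntegrand, map_sub, smul_sub]

namespace IsExpBoundedOn

theorem weightedBound_exp_smul_apply (hS : IsExpBoundedOn S γ (Iic 0)) (hγ : γ + η ≤ 0) (ξ : E) :
    WeightedBound η Z ‖ξ‖ fun t => Real.exp (Z t) • S t ξ := fun t ht =>
  calc ‖Real.exp (Z t) • S t ξ‖ = Real.exp (Z t) * ‖S t ξ‖ := by
        rw [norm_smul, Real.norm_of_nonneg (Real.exp_nonneg _)]
    _ ≤ Real.exp (Z t) * (Real.exp (-γ * t) * ‖ξ‖) := by gcongr; exact hS.norm_apply_le t ht ξ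
    _ = ‖ξ‖ * Real.exp (-γ * t + Z t) := by rw [Real.exp_add]; ring
    _ ≤ ‖ξ‖ * Real.exp (η * t + Z t) := by gcongr ‖ξ‖ * Real.exp (?_ + Z t); nlinarith

theorem norm_duhamelIntegrand_le (hS : IsExpBoundedOn S γ s) (hf : WeightedBound η Z K f)
    {t τ : ℝ} (ht : t - τ ∈ s) (hτ : τ ≤ 0) :
    ‖duhamelIntegrand S Z f t τ‖ ≤
      K * Real.exp (η * t + Z t) * Real.exp ((γ + η) * (τ - t)) :=
  calc ‖duhamelIntegrand S Z f t τ‖ = Real.exp (Z t - Z τ) * ‖S (t - τ) (f τ)‖ := by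
        rw [duhamelIntegrand, norm_smul, Real.norm_of_nonneg (Real.exp_nonneg _)]
    _ ≤ Real.exp (Z t - Z τ) *
          (Real.exp (-γ * (t - τ)) * (K * Real.exp (η * τ + Z τ))) := by
        gcongr
        exact (hS.norm_apply_le _ ht _).trans (by gcongr; exact hf τ hτ)
    _ = K * Real.exp ((Z t - Z τ) + -γ * (t - τ) + (η * τ + Z τ)) := by
        simp only [Real.exp_add]; ring
    _ = K * Real.exp ((η * t + Z t) + (γ + η) * (τ - t)) := by ring_nf
    _ = K * Real.exp (η * t + Z t) * Real.exp ((γ + η) * (τ - t)) := by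
        rw [Real.exp_add, mul_assoc]

theorem continuousOn_duhamelIntegrand (hS : IsExpBoundedOn S γ s) (hZ : Continuous Z)
    {J : Set ℝ} (hf : ContinuousOn f J) {D : Set (ℝ × ℝ)}
    (hDs : MapsTo (fun p : ℝ × ℝ => p.1 - p.2) D s) (hDJ : MapsTo Prod.snd D J) :
    ContinuousOn (uncurry (duhamelIntegrand S Z f)) D := by
  have h_orbit : ContinuousOn (fun p : ℝ × ℝ => S (p.1 - p.2) (f p.2)) D :=
    continuousOn_clm_apply_of_norm_le (b := fun p => Real.exp (-γ * (p.1 - p.2)))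
      (fun x => (hS.continuousOn_apply x).comp (by fun_prop) hDs) (by fun_prop)
      (fun p hp => hS.norm_apply_le _ (hDs hp)) (hf.comp continuousOn_snd hDJ)
  exact ContinuousOn.smul (f := fun p : ℝ × ℝ => Real.exp (Z p.1 - Z p.2)) (by fun_prop) h_orbit

theorem continuousOn_duhamelIntegrand_center (hS : IsExpBoundedOn S γ (Iic 0))
    (hZ : Continuous Z) (hf : ContinuousOn f (Iic 0)) :
    ContinuousOn (uncurry (duhamelIntegrand S Z f)) {p | p.1 ≤ p.2 ∧ p.2 ≤ 0} :=
  hS.continuousOn_duhamelIntegrand hZ hf (fun _ hp => sub_nonpos.2 hp.1) fun _ hp => hp.2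

theorem continuousOn_duhamelIntegrand_stable (hS : IsExpBoundedOn S γ (Ici 0))
    (hZ : Continuous Z) (hf : ContinuousOn f (Iic 0)) :
    ContinuousOn (uncurry (duhamelIntegrand S Z f)) {p | p.2 ≤ p.1 ∧ p.1 ≤ 0} :=
  hS.continuousOn_duhamelIntegrand hZ hf (fun _ hp => sub_nonneg.2 hp.1)
    fun _ hp => hp.1.trans hp.2

theorem intervalIntegrable_duhamelIntegrand (hS : IsExpBoundedOn S γ (Iic 0))
    (hZ : Continuous Z) (hf : ContinuousOn f (Iic 0)) {t : ℝ} (ht : t ≤ 0) :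
    IntervalIntegrable (duhamelIntegrand S Z f t) volume 0 t := by
  refine ContinuousOn.intervalIntegrable ?_
  rw [uIcc_of_ge ht]
  exact (hS.continuousOn_duhamelIntegrand_center hZ hf).comp (f := fun τ => (t, τ))
    (by fun_prop) fun τ hτ => hτ

theorem integrableOn_duhamelIntegrand (hS : IsExpBoundedOn S γ (Ici 0)) (hγ : 0 < γ + η)
    (hZ : Continuous Z) (hf : ContinuousOn f (Iic 0)) (hfK : WeightedBound η Z K f)
    {t : ℝ} (ht : t ≤ 0) : IntegrableOn (duhamelIntegrand S Z f t) (Iic t) := by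
  have h_cont : ContinuousOn (duhamelIntegrand S Z f t) (Iic t) :=
    (hS.continuousOn_duhamelIntegrand_stable hZ hf).comp (f := fun τ => (t, τ))
      (by fun_prop) fun τ hτ => ⟨hτ, ht⟩
  refine ((integrableOn_Iic_exp_mul_sub hγ t).const_mul (K * Real.exp (η * t + Z t))).mono'
    (h_cont.aestronglyMeasurable measurableSet_Iic)
    (ae_restrict_of_forall_mem measurableSet_Iic fun τ hτ => ?_)
  exact hS.norm_duhamelIntegrand_le hfK (mem_Ici.2 (sub_nonneg.2 hτ)) (hτ.trans ht)

theorem centerDuhamel_sub (hS : IsExpBoundedOn S γ (Iic 0)) (hZ : Continuous Z)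
    (hf : ContinuousOn f (Iic 0)) (hg : ContinuousOn g (Iic 0)) {t : ℝ} (ht : t ≤ 0) :
    centerDuhamel S Z (fun τ => f τ - g τ) t = centerDuhamel S Z f t - centerDuhamel S Z g t := by
  simp only [centerDuhamel, duhamelIntegrand_sub]
  exact intervalIntegral.integral_sub (hS.intervalIntegrable_duhamelIntegrand hZ hf ht)
    (hS.intervalIntegrable_duhamelIntegrand hZ hg ht)

theorem stableDuhamel_sub (hS : IsExpBoundedOn S γ (Ici 0)) (hγ : 0 < γ + η) (hZ : Continuous Z)
    (hf : ContinuousOn f (Iic 0)) (hfK : WeightedBound η Z K f)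
    (hg : ContinuousOn g (Iic 0)) {K' : ℝ} (hgK : WeightedBound η Z K' g) {t : ℝ} (ht : t ≤ 0) :
    stableDuhamel S Z (fun τ => f τ - g τ) t = stableDuhamel S Z f t - stableDuhamel S Z g t := by
  simp only [stableDuhamel, duhamelIntegrand_sub]
  exact integral_sub (hS.integrableOn_duhamelIntegrand hγ hZ hf hfK ht)
    (hS.integrableOn_duhamelIntegrand hγ hZ hg hgK ht)

theorem continuousOn_centerDuhamel (hS : IsExpBoundedOn S γ (Iic 0)) (hZ : Continuous Z)
    (hf : ContinuousOn f (Iic 0)) : ContinuousOn (centerDuhamel S Z f) (Iic 0) :=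
  continuousOn_intervalIntegral_of_continuousOn_triangle
    (hS.continuousOn_duhamelIntegrand_center hZ hf)

theorem continuousOn_stableDuhamel (hS : IsExpBoundedOn S γ (Ici 0)) (hγ : 0 < γ + η)
    (hZ : Continuous Z) (hf : ContinuousOn f (Iic 0)) (hfK : WeightedBound η Z K f) :
    ContinuousOn (stableDuhamel S Z f) (Iic 0) := by
  refine continuousOn_setIntegral_Iic_of_norm_le (C := fun t => K * Real.exp (η * t + Z t))
    (h := fun r => Real.exp (-(γ + η) * r)) (hS.continuousOn_duhamelIntegrand_stable hZ hf)
    (by fun_prop) ?_ fun t ht r hr => ?_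
  · rw [integrableOn_Ici_iff_integrableOn_Ioi]
    exact integrableOn_exp_mul_Ioi (neg_neg_of_pos hγ) 0
  · refine (hS.norm_duhamelIntegrand_le hfK ?_ ?_).trans_eq (by ring_nf)
    · simpa using hr
    · linarith

theorem weightedBound_centerDuhamel (hS : IsExpBoundedOn S γ (Iic 0)) (hγ : γ + η < 0)
    (hf : WeightedBound η Z K f) :
    WeightedBound η Z (K * -(1 / (γ + η))) (centerDuhamel S Z f) := fun t ht => by
  have h_integrable : IntegrableOn
      (fun τ => K * Real.exp (η * t + Z t) * Real.exp ((γ + η) * (τ - t))) (Ioi t) :=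
    (integrableOn_Ioi_exp_mul_sub hγ t).const_mul _
  have hK := hf.nonneg
  calc ‖centerDuhamel S Z f t‖ = ‖∫ τ in Ioc t 0, duhamelIntegrand S Z f t τ‖ := by
        rw [centerDuhamel, intervalIntegral.norm_integral_eq_norm_integral_uIoc, uIoc_of_ge ht]
    _ ≤ ∫ τ in Ioc t 0, K * Real.exp (η * t + Z t) * Real.exp ((γ + η) * (τ - t)) :=
        norm_integral_le_of_norm_le (h_integrable.mono_set Ioc_subset_Ioi_self)
          (ae_restrict_of_forall_mem measurableSet_Ioc fun τ hτ =>
            hS.norm_duhamelIntegrand_le hf (sub_nonpos.2 hτ.1.le) hτ.2)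
    _ ≤ ∫ τ in Ioi t, K * Real.exp (η * t + Z t) * Real.exp ((γ + η) * (τ - t)) :=
        setIntegral_mono_set h_integrable (ae_of_all _ fun τ => by positivity)
          Ioc_subset_Ioi_self.eventuallyLE
    _ = K * -(1 / (γ + η)) * Real.exp (η * t + Z t) := by
        rw [integral_const_mul, integral_Ioi_exp_mul_sub hγ]; ring

theorem weightedBound_stableDuhamel (hS : IsExpBoundedOn S γ (Ici 0)) (hγ : 0 < γ + η)
    (hf : WeightedBound η Z K f) :
    WeightedBound η Z (K * (1 / (γ + η))) (stableDuhamel S Z f) := fun t ht =>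
  calc ‖stableDuhamel S Z f t‖
      ≤ ∫ τ in Iic t, K * Real.exp (η * t + Z t) * Real.exp ((γ + η) * (τ - t)) :=
        norm_integral_le_of_norm_le ((integrableOn_Iic_exp_mul_sub hγ t).const_mul _)
          (ae_restrict_of_forall_mem measurableSet_Iic fun _ hτ =>
            hS.norm_duhamelIntegrand_le hf (mem_Ici.2 (sub_nonneg.2 hτ)) (hτ.trans ht))
    _ = K * (1 / (γ + η)) * Real.exp (η * t + Z t) := by
        rw [integral_const_mul, integral_Iic_exp_mul_sub hγ]; ring

end IsExpBoundedOn

end Duhamel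

section Perturbation

variable {E F : Type*} [NormedAddCommGroup E] [NormedAddCommGroup F]

/-- The standing assumptions on the nonlinearities `g_c` and `g_s`. -/
structure IsLipschitzPerturbation (L : ℝ) (g : ℝ → E → F) : Prop where
  continuous_uncurry : Continuous fun q : ℝ × E => g q.1 q.2
  apply_zero : ∀ t, g t 0 = 0
  norm_sub_le : ∀ t x y, ‖g t x - g t y‖ ≤ L * ‖x - y‖

namespace IsLipschitzPerturbation

variable {g : ℝ → E → F} {η L : ℝ} {Z : ℝ → ℝ} {v w : ℝ → E}

theorem continuousOn_comp (hg : IsLipschitzPerturbation L g) (hv : MemWeighted η Z v) :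
    ContinuousOn (fun t => g t (v t)) (Iic 0) :=
  hg.continuous_uncurry.comp_continuousOn (continuousOn_id.prodMk hv.1)

theorem weightedBound_comp (hg : IsLipschitzPerturbation L g) (hL : 0 ≤ L)
    (hv : MemWeighted η Z v) :
    WeightedBound η Z (L * weightedNorm η Z v) fun t => g t (v t) :=
  hv.weightedBound.of_norm_le_mul hL fun t _ => by
    simpa only [hg.apply_zero, sub_zero] using hg.norm_sub_le t (v t) 0

theorem weightedBound_comp_sub_comp (hg : IsLipschitzPerturbation L g) (hL : 0 ≤ L)
    (hv : MemWeighted η Z v) (hw : MemWeighted η Z w) :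
    WeightedBound η Z (L * weightedNorm η Z fun t => v t - w t) fun t => g t (v t) - g t (w t) :=
  (hv.sub hw).weightedBound.of_norm_le_mul hL fun t _ => hg.norm_sub_le t (v t) (w t)

end IsLipschitzPerturbation

end Perturbation

section LyapunovPerron

open scoped ENNReal

variable {p : ℝ≥0∞} {Ec Es : Type*}
  [NormedAddCommGroup Ec] [NormedSpace ℝ Ec] [NormedAddCommGroup Es] [NormedSpace ℝ Es]

/-- The Lyapunov–Perron map `N(v, ξ)`, on an `ℓᵖ` product of normed spaces, with
`Z t = ∫₀ᵗ z`. In an incomplete factor the Bochner integral has junk value `0`. -/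
noncomputable def lyapunovPerron (Sc : ℝ → Ec →L[ℝ] Ec) (Ss : ℝ → Es →L[ℝ] Es) (Z : ℝ → ℝ)
    (gc : ℝ → WithLp p (Ec × Es) → Ec) (gs : ℝ → WithLp p (Ec × Es) → Es)
    (v : ℝ → WithLp p (Ec × Es)) (ξ : Ec) (t : ℝ) : WithLp p (Ec × Es) :=
  WithLp.toLp p (Real.exp (Z t) • Sc t ξ + centerDuhamel Sc Z (fun τ => gc τ (v τ)) t,
    stableDuhamel Ss Z (fun τ => gs τ (v τ)) t)

variable [Fact (1 ≤ p)] {α β η L : ℝ} {Sc : ℝ → Ec →L[ℝ] Ec} {Ss : ℝ → Es →L[ℝ] Es}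
  {Z : ℝ → ℝ} {gc : ℝ → WithLp p (Ec × Es) → Ec} {gs : ℝ → WithLp p (Ec × Es) → Es}
  {v w : ℝ → WithLp p (Ec × Es)}

theorem memWeighted_lyapunovPerron (hαη : α + η < 0) (hβη : 0 < β + η)
    (hSc : IsExpBoundedOn Sc α (Iic 0)) (hSs : IsExpBoundedOn Ss β (Ici 0)) (hZ : Continuous Z)
    (hL : 0 ≤ L) (hgc : IsLipschitzPerturbation L gc) (hgs : IsLipschitzPerturbation L gs)
    (hv : MemWeighted η Z v) (ξ : Ec) :
    MemWeighted η Z (lyapunovPerron Sc Ss Z gc gs v ξ) := by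
  have hgc_bound := hgc.weightedBound_comp hL hv
  have hgs_bound := hgs.weightedBound_comp hL hv
  have h_continuous : ContinuousOn (lyapunovPerron Sc Ss Z gc gs v ξ) (Iic 0) := by
    have h_boundary : ContinuousOn (fun t => Real.exp (Z t) • Sc t ξ) (Iic 0) :=
      ContinuousOn.smul (f := fun t => Real.exp (Z t)) (by fun_prop) (hSc.continuousOn_apply ξ)
    have h_center := hSc.continuousOn_centerDuhamel hZ (hgc.continuousOn_comp hv)
    have h_stable := hSs.continuousOn_stableDuhamel hβη hZ (hgs.continuousOn_comp hv) hgs_bound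
    exact (WithLp.prod_continuous_toLp p Ec Es).comp_continuousOn
      ((h_boundary.add h_center).prodMk h_stable)
  have h_bound := ((hSc.weightedBound_exp_smul_apply hαη.le ξ).add
    (hSc.weightedBound_centerDuhamel hαη hgc_bound)).toLp_prod (p := p)
    (hSs.weightedBound_stableDuhamel hβη hgs_bound)
  exact memWeighted_iff_exists_weightedBound.2 ⟨h_continuous, _, h_bound⟩

theorem lyapunovPerron_sub_lyapunovPerron (hβη : 0 < β + η)
    (hSc : IsExpBoundedOn Sc α (Iic 0)) (hSs : IsExpBoundedOn Ss β (Ici 0)) (hZ : Continuous Z)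
    (hL : 0 ≤ L) (hgc : IsLipschitzPerturbation L gc) (hgs : IsLipschitzPerturbation L gs)
    (hv : MemWeighted η Z v) (hw : MemWeighted η Z w) (ξ : Ec) {t : ℝ} (ht : t ≤ 0) :
    lyapunovPerron Sc Ss Z gc gs v ξ t - lyapunovPerron Sc Ss Z gc gs w ξ t =
      WithLp.toLp p (centerDuhamel Sc Z (fun τ => gc τ (v τ) - gc τ (w τ)) t,
        stableDuhamel Ss Z (fun τ => gs τ (v τ) - gs τ (w τ)) t) := by
  rw [hSc.centerDuhamel_sub hZ (hgc.continuousOn_comp hv) (hgc.continuousOn_comp hw) ht,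
    hSs.stableDuhamel_sub hβη hZ (hgs.continuousOn_comp hv) (hgs.weightedBound_comp hL hv)
      (hgs.continuousOn_comp hw) (hgs.weightedBound_comp hL hw) ht]
  simp only [lyapunovPerron, ← WithLp.toLp_sub, Prod.mk_sub_mk, add_sub_add_left_eq_sub]

theorem weightedNorm_lyapunovPerron_sub_le (hαη : α + η < 0) (hβη : 0 < β + η)
    (hSc : IsExpBoundedOn Sc α (Iic 0)) (hSs : IsExpBoundedOn Ss β (Ici 0)) (hZ : Continuous Z)
    (hL : 0 ≤ L) (hgc : IsLipschitzPerturbation L gc) (hgs : IsLipschitzPerturbation L gs)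
    (hv : MemWeighted η Z v) (hw : MemWeighted η Z w) (ξ : Ec) :
    weightedNorm η Z (fun t =>
        lyapunovPerron Sc Ss Z gc gs v ξ t - lyapunovPerron Sc Ss Z gc gs w ξ t) ≤
      L * (1 / (η + β) - 1 / (α + η)) * weightedNorm η Z (fun t => v t - w t) := by
  have h_center := hSc.weightedBound_centerDuhamel hαη
    (hgc.weightedBound_comp_sub_comp hL hv hw)
  have h_stable := hSs.weightedBound_stableDuhamel hβη
    (hgs.weightedBound_comp_sub_comp hL hv hw)
  have h_diff : WeightedBound η Z _ fun t =>
      lyapunovPerron Sc Ss Z gc gs v ξ t - lyapunovPerron Sc Ss Z gc gs w ξ t :=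
    (h_center.toLp_prod h_stable).congr fun _ ht =>
      lyapunovPerron_sub_lyapunovPerron hβη hSc hSs hZ hL hgc hgs hv hw ξ ht
  exact h_diff.weightedNorm_le.trans_eq (by ring)

theorem weightedNorm_lyapunovPerron_sub_le_norm_sub (hαη : α + η ≤ 0)
    (hSc : IsExpBoundedOn Sc α (Iic 0)) (v : ℝ → WithLp p (Ec × Es)) (ξ ξ' : Ec) :
    weightedNorm η Z (fun t =>
        lyapunovPerron Sc Ss Z gc gs v ξ t - lyapunovPerron Sc Ss Z gc gs v ξ' t) ≤
      ‖ξ - ξ'‖ := by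
  refine WeightedBound.weightedNorm_le fun t ht => ?_
  have h_diff : lyapunovPerron Sc Ss Z gc gs v ξ t - lyapunovPerron Sc Ss Z gc gs v ξ' t =
      WithLp.toLp p (Real.exp (Z t) • Sc t (ξ - ξ'), 0) := by
    simp only [lyapunovPerron, ← WithLp.toLp_sub, Prod.mk_sub_mk, add_sub_add_right_eq_sub,
      sub_self, map_sub, smul_sub]
  rw [h_diff, WithLp.norm_toLp_fst]
  exact hSc.weightedBound_exp_smul_apply hαη (ξ - ξ') t ht

theorem stmt_1_general [CompleteSpace Ec] [CompleteSpace Es] (hαη : α + η < 0) (hβη : 0 < β + η)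
    (hSc : IsExpBoundedOn Sc α (Iic 0)) (hSs : IsExpBoundedOn Ss β (Ici 0)) (hZ : Continuous Z)
    (hL : 0 ≤ L) (hgc : IsLipschitzPerturbation L gc) (hgs : IsLipschitzPerturbation L gs) :
    (∀ (ξ : Ec) (v : ℝ → WithLp p (Ec × Es)), MemWeighted η Z v →
      MemWeighted η Z (lyapunovPerron Sc Ss Z gc gs v ξ)) ∧
    (∀ (ξ : Ec) (v w : ℝ → WithLp p (Ec × Es)), MemWeighted η Z v → MemWeighted η Z w →
      weightedNorm η Z (fun t =>
          lyapunovPerron Sc Ss Z gc gs v ξ t - lyapunovPerron Sc Ss Z gc gs w ξ t) ≤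
        L * (1 / (η + β) - 1 / (α + η)) * weightedNorm η Z (fun t => v t - w t)) ∧
    (∀ (ξ ξ' : Ec) (v : ℝ → WithLp p (Ec × Es)), MemWeighted η Z v →
      weightedNorm η Z (fun t =>
          lyapunovPerron Sc Ss Z gc gs v ξ t - lyapunovPerron Sc Ss Z gc gs v ξ' t) ≤
        ‖ξ - ξ'‖) :=
  ⟨fun ξ _ hv => memWeighted_lyapunovPerron hαη hβη hSc hSs hZ hL hgc hgs hv ξ,
    fun ξ _ _ hv hw =>
      weightedNorm_lyapunovPerron_sub_le hαη hβη hSc hSs hZ hL hgc hgs hv hw ξ,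
    fun ξ ξ' v _ => weightedNorm_lyapunovPerron_sub_le_norm_sub hαη.le hSc v ξ ξ'⟩

end LyapunovPerron

/-- The Lyapunov–Perron operator `N` maps the weighted space `C_η⁻` into itself, is a
contraction with constant `L·(1/(η+β) − 1/(α+η))` in its first argument, and is
`1`-Lipschitz in the boundary value `ξ`. Here `H = H_c ×₂ H_s`, `S_c` is the group on
the center part with `‖S_c(t)x‖ ≤ e^{−αt}‖x‖` for `t ≤ 0`, `S_s` the stable semigroup
with `‖S_s(t)x‖ ≤ e^{−βt}‖x‖` for `t ≥ 0`, and `g_c, g_s` are the nonlinearities,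
vanishing at `0` and `L`-Lipschitz uniformly in time. -/
theorem stmt_1
    {Hc Hs : Type*}
    [NormedAddCommGroup Hc] [InnerProductSpace ℝ Hc] [CompleteSpace Hc]
    [TopologicalSpace.SeparableSpace Hc]
    [NormedAddCommGroup Hs] [InnerProductSpace ℝ Hs] [CompleteSpace Hs]
    [TopologicalSpace.SeparableSpace Hs]
    (α β η : ℝ) (hα : 0 ≤ α) (hαβ : α < β) (hη1 : -β < η) (hη2 : η < -α)
    (Sc : ℝ → Hc →L[ℝ] Hc)
    (hSc0 : Sc 0 = ContinuousLinearMap.id ℝ Hc)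
    (hScgrp : ∀ s t : ℝ, Sc (s + t) = (Sc s).comp (Sc t))
    (hSccont : ∀ x : Hc, Continuous fun t => Sc t x)
    (hScbnd : ∀ t : ℝ, t ≤ 0 → ∀ x : Hc, ‖Sc t x‖ ≤ Real.exp (-α * t) * ‖x‖)
    (Ss : ℝ → Hs →L[ℝ] Hs)
    (hSs0 : Ss 0 = ContinuousLinearMap.id ℝ Hs)
    (hSsgrp : ∀ s t : ℝ, 0 ≤ s → 0 ≤ t → Ss (s + t) = (Ss s).comp (Ss t))
    (hSscont : ∀ x : Hs, ContinuousOn (fun t => Ss t x) (Ici 0))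
    (hSsbnd : ∀ t : ℝ, 0 ≤ t → ∀ x : Hs, ‖Ss t x‖ ≤ Real.exp (-β * t) * ‖x‖)
    (z : ℝ → ℝ) (hz : Continuous z)
    (L : ℝ) (hL : 0 ≤ L)
    (gc : ℝ → WithLp 2 (Hc × Hs) → Hc)
    (gs : ℝ → WithLp 2 (Hc × Hs) → Hs)
    (hgcCont : Continuous fun p : ℝ × WithLp 2 (Hc × Hs) => gc p.1 p.2)
    (hgsCont : Continuous fun p : ℝ × WithLp 2 (Hc × Hs) => gs p.1 p.2)
    (hgc0 : ∀ t : ℝ, gc t 0 = 0) (hgs0 : ∀ t : ℝ, gs t 0 = 0)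
    (hgcLip : ∀ (t : ℝ) (x y : WithLp 2 (Hc × Hs)), ‖gc t x - gc t y‖ ≤ L * ‖x - y‖)
    (hgsLip : ∀ (t : ℝ) (x y : WithLp 2 (Hc × Hs)), ‖gs t x - gs t y‖ ≤ L * ‖x - y‖)
    -- membership in the weighted space `C_η⁻` of continuous functions on `(−∞,0]`
    (memC : (ℝ → WithLp 2 (Hc × Hs)) → Prop)
    (hmemC : ∀ v, memC v ↔ ContinuousOn v (Iic 0) ∧
      BddAbove ((fun t => Real.exp (-η * t - ∫ s in (0:ℝ)..t, z s) * ‖v t‖) '' Iic 0))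
    -- the norm of `C_η⁻`
    (normEta : (ℝ → WithLp 2 (Hc × Hs)) → ℝ)
    (hnormEta : ∀ v, normEta v =
      sSup ((fun t => Real.exp (-η * t - ∫ s in (0:ℝ)..t, z s) * ‖v t‖) '' Iic 0))
    -- the Lyapunov–Perron map
    (N : (ℝ → WithLp 2 (Hc × Hs)) → Hc → ℝ → WithLp 2 (Hc × Hs))
    (hN : ∀ v ξ t, N v ξ t = (WithLp.equiv 2 (Hc × Hs)).symm
      (Real.exp (∫ s in (0:ℝ)..t, z s) • Sc t ξ +
        ∫ τ in (0:ℝ)..t, Real.exp (∫ s in τ..t, z s) • Sc (t - τ) (gc τ (v τ)),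
       ∫ τ in Iic t, Real.exp (∫ s in τ..t, z s) • Ss (t - τ) (gs τ (v τ)))) :
    -- `N(·, ξ)` maps `C_η⁻` to itself
    (∀ (ξ : Hc) (v : ℝ → WithLp 2 (Hc × Hs)), memC v → memC (N v ξ)) ∧
    -- contraction estimate in `v`
    (∀ (ξ : Hc) (v w : ℝ → WithLp 2 (Hc × Hs)), memC v → memC w →
      normEta (fun t => N v ξ t - N w ξ t) ≤
        L * (1 / (η + β) - 1 / (α + η)) * normEta (fun t => v t - w t)) ∧
    -- Lipschitz estimate in `ξ`
    (∀ (ξ ξ' : Hc) (v : ℝ → WithLp 2 (Hc × Hs)), memC v →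
      normEta (fun t => N v ξ t - N v ξ' t) ≤ ‖ξ - ξ'‖) := by
  obtain rfl : memC = MemWeighted η fun t => ∫ s in (0 : ℝ)..t, z s :=
    funext fun v => propext (hmemC v)
  obtain rfl : normEta = weightedNorm η fun t => ∫ s in (0 : ℝ)..t, z s := funext hnormEta
  obtain rfl : N = lyapunovPerron Sc Ss (fun t => ∫ s in (0 : ℝ)..t, z s) gc gs := by
    ext v ξ t : 3
    simp only [hN, lyapunovPerron, centerDuhamel, stableDuhamel, duhamelIntegrand,
      intervalIntegral.integral_interval_sub_left (hz.intervalIntegrable _ _)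
        (hz.intervalIntegrable _ _), WithLp.equiv_symm_apply]
  exact stmt_1_general (by linarith) (by linarith)
    ⟨fun x => (hSccont x).continuousOn, hScbnd⟩ ⟨hSscont, hSsbnd⟩
    (intervalIntegral.continuous_primitive (fun _ _ => hz.intervalIntegrable _ _) 0)
    hL ⟨hgcCont, hgc0, hgcLip⟩ ⟨hgsCont, hgs0, hgsLip⟩
end

section
/- Let α, β ∈ ℝ, L ≥ 0, δ > 0, let z : [0,T] → ℝ, and let P, Q : [0,T] → ℝ be differentiable with P(t) > 0 and Q(t) ≥ 0 for all t ∈ [0,T], satisfying for every t ∈ [0,T]: (1/2)P'(t) ≥ (−α + z(t) − L)·P(t) − L·√(P(t)Q(t)) and (1/2)Q'(t) ≤ (−β + z(t) + L)·Q(t) + L·√(P(t)Q(t)). If α − β + 2L + δL + δ^{−1}L < 0 and Q(0) ≤ δ²·P(0), then Q(t) ≤ δ²·P(t) for all t ∈ [0,T] (cone invariance: once the difference of two solutions lies in the cone ‖q‖ ≤ δ‖p‖, it cannot leave it). -/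
/-!
On the boundary `Q = δ² P` of the cone, `√(P Q) = δ P`, so both differential inequalities become
linear in `P` and combine to `Q' - δ² P' ≤ 2 δ² P (α - β + 2 L + δ L + δ⁻¹ L) < 0`; the drift `z`
cancels. The function `Q - δ² P` is thus strictly decreasing at each of its zeros, and having
started nonpositive it cannot become positive.
-/

theorem sqrt_mul_eq_mul_of_eq_sq_mul {δ p q : ℝ} (hδ : 0 ≤ δ) (hp : 0 ≤ p) (hq : q = δ ^ 2 * p) :
    √(p * q) = δ * p := by
  have h_sq : p * q = (δ * p) ^ 2 := by rw [hq]; ring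
  rw [h_sq, Real.sqrt_sq (mul_nonneg hδ hp)]

theorem deriv_lt_sq_mul_deriv_of_mem_cone_boundary {α β L δ z p q p' q' : ℝ}
    (hδ : 0 < δ) (hp : 0 < p) (hq : q = δ ^ 2 * p)
    (hp' : (-α + z - L) * p - L * √(p * q) ≤ (1 / 2) * p')
    (hq' : (1 / 2) * q' ≤ (-β + z + L) * q + L * √(p * q))
    (hsmall : α - β + 2 * L + δ * L + δ⁻¹ * L < 0) :
    q' < δ ^ 2 * p' := by
  rw [sqrt_mul_eq_mul_of_eq_sq_mul hδ.le hp.le hq] at hp' hq'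
  have h_gap : 2 * (δ ^ 2 * p) * (α - β + 2 * L + δ * L + δ⁻¹ * L) < 0 :=
    mul_neg_of_pos_of_neg (by positivity) hsmall
  calc
    q' ≤ 2 * ((-β + z + L) * q + L * (δ * p)) := by linarith
    _ = δ ^ 2 * (2 * ((-α + z - L) * p - L * (δ * p))) +
          2 * (δ ^ 2 * p) * (α - β + 2 * L + δ * L + δ⁻¹ * L) := by
      rw [hq]
      field_simp
      ring
    _ < δ ^ 2 * (2 * ((-α + z - L) * p - L * (δ * p))) := add_lt_of_neg_right _ h_gap
    _ ≤ δ ^ 2 * p' := by gcongr; linarith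

theorem stmt_4_general {α β L δ a b : ℝ} {z P Q P' Q' : ℝ → ℝ} (hδ : 0 < δ)
    (hPc : ContinuousOn P (Set.Icc a b)) (hQc : ContinuousOn Q (Set.Icc a b))
    (hP : ∀ t ∈ Set.Ico a b, HasDerivWithinAt P (P' t) (Set.Ici t) t)
    (hQ : ∀ t ∈ Set.Ico a b, HasDerivWithinAt Q (Q' t) (Set.Ici t) t)
    (hPpos : ∀ t ∈ Set.Ico a b, Q t = δ ^ 2 * P t → 0 < P t)
    (hP' : ∀ t ∈ Set.Ico a b, Q t = δ ^ 2 * P t →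
      (-α + z t - L) * P t - L * √(P t * Q t) ≤ (1 / 2) * P' t)
    (hQ' : ∀ t ∈ Set.Ico a b, Q t = δ ^ 2 * P t →
      (1 / 2) * Q' t ≤ (-β + z t + L) * Q t + L * √(P t * Q t))
    (hsmall : α - β + 2 * L + δ * L + δ⁻¹ * L < 0)
    (ha : Q a ≤ δ ^ 2 * P a) :
    ∀ t ∈ Set.Icc a b, Q t ≤ δ ^ 2 * P t :=
  image_le_of_deriv_right_lt_deriv_boundary' hQc hQ ha (hPc.const_mul (δ ^ 2))
    (fun t ht ↦ (hP t ht).const_mul (δ ^ 2))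
    fun t ht h_boundary ↦ deriv_lt_sq_mul_deriv_of_mem_cone_boundary hδ (hPpos t ht h_boundary)
      h_boundary (hP' t ht h_boundary) (hQ' t ht h_boundary) hsmall

/-- Cone invariance: once the difference of two solutions lies in the cone
`‖q‖ ≤ δ‖p‖`, it cannot leave it. -/
theorem stmt_4 (α β L δ T : ℝ) (hL : 0 ≤ L) (hδ : 0 < δ) (hT : 0 ≤ T)
    (z P Q P' Q' : ℝ → ℝ)
    (hP : ∀ t ∈ Set.Icc 0 T, HasDerivAt P (P' t) t)
    (hQ : ∀ t ∈ Set.Icc 0 T, HasDerivAt Q (Q' t) t)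
    (hPpos : ∀ t ∈ Set.Icc 0 T, 0 < P t)
    (hQnn : ∀ t ∈ Set.Icc 0 T, 0 ≤ Q t)
    (hP' : ∀ t ∈ Set.Icc 0 T,
      (1 / 2) * P' t ≥ (-α + z t - L) * P t - L * Real.sqrt (P t * Q t))
    (hQ' : ∀ t ∈ Set.Icc 0 T,
      (1 / 2) * Q' t ≤ (-β + z t + L) * Q t + L * Real.sqrt (P t * Q t))
    (hsmall : α - β + 2 * L + δ * L + δ⁻¹ * L < 0)
    (h0 : Q 0 ≤ δ ^ 2 * P 0) :
    ∀ t ∈ Set.Icc 0 T, Q t ≤ δ ^ 2 * P t := by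
  have h_sub : Set.Ico 0 T ⊆ Set.Icc 0 T := Set.Ico_subset_Icc_self
  exact stmt_4_general hδ (HasDerivAt.continuousOn hP) (HasDerivAt.continuousOn hQ)
    (fun t ht ↦ (hP t (h_sub ht)).hasDerivWithinAt) (fun t ht ↦ (hQ t (h_sub ht)).hasDerivWithinAt)
    (fun t ht _ ↦ hPpos t (h_sub ht)) (fun t ht _ ↦ hP' t (h_sub ht))
    (fun t ht _ ↦ hQ' t (h_sub ht)) hsmall h0
end

section
/- Let β ∈ ℝ, L ≥ 0, δ > 0, let z : [0,t₀] → ℝ be continuous, and set k = β − L − δ^{−1}L. Let P, Q : [0,t₀] → ℝ be differentiable and nonnegative with Q(t) ≥ δ²·P(t) for all t ∈ [0,t₀], and suppose (1/2)Q'(t) ≤ (−β + z(t) + L)·Q(t) + L·√(P(t)Q(t)) for all t ∈ [0,t₀]. Then for every t ∈ [0,t₀]: Q(t) ≤ Q(0)·e^{−2kt + 2∫_0^t z(s)ds} and P(t) ≤ δ^{−2}·Q(0)·e^{−2kt + 2∫_0^t z(s)ds}. -/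
/-!
Outside the cone, `√(P Q) ≤ δ⁻¹ Q`, so the differential inequality closes up to the linear one
`Q' ≤ (-2k + 2z) Q`, and Grönwall's inequality gives the decay of `Q`, hence that of
`P ≤ δ⁻² Q`. Grönwall's inequality is obtained by integrating the derivative of `log f`, which asks
for no more than integrability of the coefficient; zeros of `f` are harmless, because after its last
zero `f` would be bounded by a multiple of its value there.
-/

open Set MeasureTheory

theorem exists_isGreatest_zero_of_continuousOn {α β : Type*} [LinearOrder α] [TopologicalSpace α]
    [OrderClosedTopology α] [Zero β] [TopologicalSpace β] [T1Space β] {f : α → β} {K : Set α}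
    (hK : IsCompact K) (hf : ContinuousOn f K) (hzero : ∃ x ∈ K, f x = 0) :
    ∃ s, IsGreatest {x ∈ K | f x = 0} s :=
  have hclosed : IsClosed {x ∈ K | f x = 0} :=
    hf.preimage_isClosed_of_isClosed hK.isClosed isClosed_singleton
  (hK.of_isClosed_subset hclosed (sep_subset _ _)).exists_isGreatest hzero

section Gronwall

variable {f f' g : ℝ → ℝ} {a b : ℝ}

theorem le_mul_exp_integral_of_deriv_right_le_of_pos (hab : a ≤ b)
    (hf : ContinuousOn f (Icc a b))
    (hf' : ∀ x ∈ Ioo a b, HasDerivWithinAt f (f' x) (Ioi x) x)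
    (hg : IntegrableOn g (Icc a b)) (hpos : ∀ x ∈ Icc a b, 0 < f x)
    (hle : ∀ x ∈ Ioo a b, f' x ≤ g x * f x) :
    f b ≤ f a * Real.exp (∫ x in a..b, g x) := by
  have hlog : Real.log (f b) - Real.log (f a) ≤ ∫ x in a..b, g x :=
    intervalIntegral.sub_le_integral_of_hasDeriv_right_of_le hab
      (hf.log fun x hx => (hpos x hx).ne')
      (fun x hx => (hf' x hx).log (hpos x (Ioo_subset_Icc_self hx)).ne') hg
      (fun x hx => (div_le_iff₀ (hpos x (Ioo_subset_Icc_self hx))).2 (hle x hx))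
  have ha := hpos a (left_mem_Icc.2 hab)
  have hb := hpos b (right_mem_Icc.2 hab)
  calc f b = Real.exp (Real.log (f b)) := (Real.exp_log hb).symm
    _ ≤ Real.exp (Real.log (f a) + ∫ x in a..b, g x) := Real.exp_le_exp.2 (by linarith)
    _ = f a * Real.exp (∫ x in a..b, g x) := by rw [Real.exp_add, Real.exp_log ha]

theorem le_mul_exp_integral_of_deriv_right_le_of_pos_Ioc (hab : a < b)
    (hf : ContinuousOn f (Icc a b))
    (hf' : ∀ x ∈ Ioo a b, HasDerivWithinAt f (f' x) (Ioi x) x)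
    (hg : IntegrableOn g (Icc a b)) (hpos : ∀ x ∈ Ioc a b, 0 < f x)
    (hle : ∀ x ∈ Ioo a b, f' x ≤ g x * f x) :
    f b ≤ f a * Real.exp (∫ x in a..b, g x) := by
  have hbound : ∀ y ∈ Ioc a b, f b ≤ f y * Real.exp (∫ x in y..b, g x) := fun y hy =>
    have hIcc : Icc y b ⊆ Icc a b := Icc_subset_Icc_left hy.1.le
    have hIoo : Ioo y b ⊆ Ioo a b := Ioo_subset_Ioo_left hy.1.le
    le_mul_exp_integral_of_deriv_right_le_of_pos hy.2 (hf.mono hIcc)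
      (fun x hx => hf' x (hIoo hx)) (hg.mono_set hIcc)
      (fun x hx => hpos x ⟨hy.1.trans_le hx.1, hx.2⟩) (fun x hx => hle x (hIoo hx))
  have hprimitive : ContinuousOn (fun y => ∫ x in y..b, g x) (Icc a b) := by
    rw [← uIcc_of_le hab.le] at hg ⊢
    exact intervalIntegral.continuousOn_primitive_interval_left hg
  have hcont : ContinuousOn (fun y => f y * Real.exp (∫ x in y..b, g x)) (Icc a b) :=
    hf.mul hprimitive.rexp
  have ha : a ∈ closure (Ioc a b) := by
    rw [closure_Ioc hab.ne]
    exact left_mem_Icc.2 hab.le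
  exact continuousWithinAt_const.closure_le ha
    ((hcont a (left_mem_Icc.2 hab.le)).mono Ioc_subset_Icc_self) hbound

theorem le_mul_exp_integral_of_deriv_right_le (hab : a ≤ b)
    (hf : ContinuousOn f (Icc a b))
    (hf' : ∀ x ∈ Ioo a b, HasDerivWithinAt f (f' x) (Ioi x) x)
    (hg : IntegrableOn g (Icc a b)) (hnonneg : ∀ x ∈ Icc a b, 0 ≤ f x)
    (hle : ∀ x ∈ Ioo a b, f' x ≤ g x * f x) :
    f b ≤ f a * Real.exp (∫ x in a..b, g x) := by
  by_cases hzero : ∃ x ∈ Icc a b, f x = 0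
  · obtain ⟨s, ⟨hs, hfs⟩, hlast⟩ := exists_isGreatest_zero_of_continuousOn isCompact_Icc hf hzero
    have hfb : f b ≤ 0 := by
      obtain rfl | hsb := hs.2.eq_or_lt
      · exact hfs.le
      have hIcc : Icc s b ⊆ Icc a b := Icc_subset_Icc_left hs.1
      have hIoo : Ioo s b ⊆ Ioo a b := Ioo_subset_Ioo_left hs.1
      have hpos : ∀ x ∈ Ioc s b, 0 < f x := fun x hx =>
        have hx' : x ∈ Icc a b := hIcc (Ioc_subset_Icc_self hx)
        (hnonneg x hx').lt_of_ne' fun hfx => (hlast ⟨hx', hfx⟩).not_gt hx.1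
      simpa only [hfs, zero_mul] using
        le_mul_exp_integral_of_deriv_right_le_of_pos_Ioc hsb (hf.mono hIcc)
          (fun x hx => hf' x (hIoo hx)) (hg.mono_set hIcc) hpos (fun x hx => hle x (hIoo hx))
    exact hfb.trans (mul_nonneg (hnonneg a (left_mem_Icc.2 hab)) (Real.exp_pos _).le)
  · push Not at hzero
    exact le_mul_exp_integral_of_deriv_right_le_of_pos hab hf hf' hg
      (fun x hx => (hnonneg x hx).lt_of_ne' (hzero x hx)) hle

end Gronwall

section Cone

variable {δ p q : ℝ}

theorem le_inv_sq_mul_of_sq_mul_le (hδ : 0 < δ) (h : δ ^ 2 * p ≤ q) : p ≤ δ⁻¹ ^ 2 * q := by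
  rw [inv_pow]
  exact (le_inv_mul_iff₀ (pow_pos hδ 2)).2 h

theorem sqrt_mul_le_inv_mul_of_sq_mul_le (hδ : 0 < δ) (hq : 0 ≤ q) (h : δ ^ 2 * p ≤ q) :
    √(p * q) ≤ δ⁻¹ * q := by
  refine Real.sqrt_le_iff.2 ⟨by positivity, ?_⟩
  calc p * q ≤ δ⁻¹ ^ 2 * q * q :=
        mul_le_mul_of_nonneg_right (le_inv_sq_mul_of_sq_mul_le hδ h) hq
    _ = (δ⁻¹ * q) ^ 2 := by ring

end Cone

theorem integral_const_add_const_mul {z : ℝ → ℝ} {a b : ℝ} (c d : ℝ)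
    (hz : IntervalIntegrable z volume a b) :
    ∫ s in a..b, (c + d * z s) = c * (b - a) + d * ∫ s in a..b, z s := by
  rw [intervalIntegral.integral_add intervalIntegrable_const (hz.const_mul d),
    intervalIntegral.integral_const, intervalIntegral.integral_const_mul, smul_eq_mul, mul_comm c]

theorem stmt_5_general {β L δ t₀ k : ℝ} (hL : 0 ≤ L) (hδ : 0 < δ)
    (hk : k = β - L - δ⁻¹ * L) {z P Q Q' : ℝ → ℝ} (hz : IntegrableOn z (Icc 0 t₀))
    (hQ : ContinuousOn Q (Icc 0 t₀))
    (hQderiv : ∀ t ∈ Ioo 0 t₀, HasDerivWithinAt Q (Q' t) (Ioi t) t)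
    (hP : ∀ t ∈ Icc 0 t₀, 0 ≤ P t) (hcone : ∀ t ∈ Icc 0 t₀, δ ^ 2 * P t ≤ Q t)
    (hQ' : ∀ t ∈ Ioo 0 t₀, (1 / 2) * Q' t ≤ (-β + z t + L) * Q t + L * √(P t * Q t)) :
    ∀ t ∈ Icc 0 t₀,
      Q t ≤ Q 0 * Real.exp (-2 * k * t + 2 * ∫ s in (0 : ℝ)..t, z s) ∧
      P t ≤ δ⁻¹ ^ 2 * Q 0 * Real.exp (-2 * k * t + 2 * ∫ s in (0 : ℝ)..t, z s) := by
  have hQnonneg : ∀ t ∈ Icc 0 t₀, 0 ≤ Q t := fun t ht =>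
    (mul_nonneg (sq_nonneg δ) (hP t ht)).trans (hcone t ht)
  have hlinear : ∀ t ∈ Ioo 0 t₀, Q' t ≤ (-2 * k + 2 * z t) * Q t := fun t ht => by
    have ht' := Ioo_subset_Icc_self ht
    have hsqrt := mul_le_mul_of_nonneg_left
      (sqrt_mul_le_inv_mul_of_sq_mul_le hδ (hQnonneg t ht') (hcone t ht')) hL
    rw [hk]
    linarith [hQ' t ht]
  intro t ht
  have hIcc : Icc 0 t ⊆ Icc 0 t₀ := Icc_subset_Icc_right ht.2
  have hIoo : Ioo 0 t ⊆ Ioo 0 t₀ := Ioo_subset_Ioo_right ht.2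
  have hzt : IntegrableOn z (Icc 0 t) := hz.mono_set hIcc
  have hzt' : IntervalIntegrable z volume 0 t :=
    (intervalIntegrable_iff_integrableOn_Icc_of_le ht.1).2 hzt
  have hdecay : Q t ≤ Q 0 * Real.exp (-2 * k * t + 2 * ∫ s in (0 : ℝ)..t, z s) := by
    have hgronwall := le_mul_exp_integral_of_deriv_right_le ht.1 (hQ.mono hIcc)
      (fun s hs => hQderiv s (hIoo hs)) (continuousOn_const.integrableOn_Icc.add (hzt.const_mul 2))
      (fun s hs => hQnonneg s (hIcc hs)) (fun s hs => hlinear s (hIoo hs))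
    simpa only [Pi.add_apply, integral_const_add_const_mul _ _ hzt', sub_zero] using hgronwall
  refine ⟨hdecay, ?_⟩
  calc P t ≤ δ⁻¹ ^ 2 * Q t := le_inv_sq_mul_of_sq_mul_le hδ (hcone t ht)
    _ ≤ δ⁻¹ ^ 2 * (Q 0 * Real.exp (-2 * k * t + 2 * ∫ s in (0 : ℝ)..t, z s)) :=
        mul_le_mul_of_nonneg_left hdecay (sq_nonneg _)
    _ = _ := (mul_assoc _ _ _).symm

/-- Exponential decay estimate for trajectories outside the cone, used in the proof
of almost sure asymptotic completeness. -/
theorem stmt_5 (β L δ t₀ : ℝ) (hL : 0 ≤ L) (hδ : 0 < δ) (ht₀ : 0 ≤ t₀)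
    (z : ℝ → ℝ) (hz : ContinuousOn z (Set.Icc 0 t₀))
    (k : ℝ) (hk : k = β - L - δ⁻¹ * L)
    (P Q P' Q' : ℝ → ℝ)
    (hP : ∀ t ∈ Set.Icc 0 t₀, HasDerivAt P (P' t) t)
    (hQ : ∀ t ∈ Set.Icc 0 t₀, HasDerivAt Q (Q' t) t)
    (hPnn : ∀ t ∈ Set.Icc 0 t₀, 0 ≤ P t)
    (hQnn : ∀ t ∈ Set.Icc 0 t₀, 0 ≤ Q t)
    (hcone : ∀ t ∈ Set.Icc 0 t₀, δ ^ 2 * P t ≤ Q t)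
    (hQ' : ∀ t ∈ Set.Icc 0 t₀,
      (1 / 2) * Q' t ≤ (-β + z t + L) * Q t + L * Real.sqrt (P t * Q t)) :
    ∀ t ∈ Set.Icc 0 t₀,
      Q t ≤ Q 0 * Real.exp (-2 * k * t + 2 * ∫ s in (0:ℝ)..t, z s) ∧
      P t ≤ δ⁻¹ ^ 2 * Q 0 * Real.exp (-2 * k * t + 2 * ∫ s in (0:ℝ)..t, z s) := by
  exact stmt_5_general hL hδ hk hz.integrableOn_Icc
    (fun t ht => (hQ t ht).continuousAt.continuousWithinAt)
    (fun t ht => (hQ t (Ioo_subset_Icc_self ht)).hasDerivWithinAt) hPnn hcone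
    (fun t ht => hQ' t (Ioo_subset_Icc_self ht))
end

section
/- Let ω : ℝ → ℝ be continuous and such that s ↦ e^s·ω(s) is Lebesgue integrable on (−∞, 0]. Then for every t ∈ ℝ the integral ∫_{−∞}^t e^{s−t}·ω(s) ds converges, the function z_ω(t) := ω(t) − ∫_{−∞}^t e^{s−t}·ω(s) ds is continuous, and for every t ∈ ℝ one has z_ω(t) + ∫_0^t z_ω(s) ds = z_ω(0) + ω(t) − ω(0). (Pathwise, z_ω is the stationary solution of the Langevin equation dz + z dt = dω.) -/
open MeasureTheory

/-!
Factoring the exponential weight, `∫_{-∞}^t e^{a(s-t)} ω(s) ds = e^{-at} ∫_{-∞}^t e^{as} ω(s) ds`,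
so by the fundamental theorem of calculus and the product rule this integral is an antiderivative of
`z = ω - a ∫_{-∞}^t e^{a(s-t)} ω(s) ds`. Hence `z + a ∫ z` differs from `ω` by a constant.
-/

open Set Filter Topology

section ImproperIntegral

variable {E : Type*} [NormedAddCommGroup E]

theorem integrableOn_Iic_of_locallyIntegrable {X : Type*} [LinearOrder X] [TopologicalSpace X]
    [CompactIccSpace X] [MeasurableSpace X] {μ : Measure X} {f : X → E}
    (hf : LocallyIntegrable f μ) {b : X} (hb : IntegrableOn f (Iic b) μ) (t : X) :
    IntegrableOn f (Iic t) μ :=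
  integrableOn_Iic_iff_integrableAtFilter_atBot.2
    ⟨(integrableOn_Iic_iff_integrableAtFilter_atBot.1 hb).1, hf.locallyIntegrableOn _⟩

theorem hasDerivAt_integral_Iic [NormedSpace ℝ E] [CompleteSpace E] {f : ℝ → E} {t b : ℝ}
    (hf : IntegrableOn f (Iic b)) (htb : t < b) (hcont : ContinuousAt f t) :
    HasDerivAt (fun u ↦ ∫ s in Iic u, f s) (f t) t := by
  have hmeas : StronglyMeasurableAtFilter f (𝓝 t) :=
    ⟨Iic b, Iic_mem_nhds htb, hf.aestronglyMeasurable⟩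
  have hderiv : HasDerivAt (fun u ↦ ∫ s in t..u, f s) (f t) t :=
    intervalIntegral.integral_hasDerivAt_right IntervalIntegrable.refl hmeas hcont
  refine (hderiv.const_add (∫ s in Iic t, f s)).congr_of_eventuallyEq ?_
  filter_upwards [Iic_mem_nhds htb] with u hub
  rw [← intervalIntegral.integral_Iic_sub_Iic (hf.mono_set (Iic_subset_Iic.2 htb.le))
    (hf.mono_set (Iic_subset_Iic.2 hub)), add_sub_cancel]

end ImproperIntegral

section Langevin

variable {E : Type*} [NormedAddCommGroup E] [NormedSpace ℝ E]

/-- The exponentially discounted past `∫_{-∞}^t e^{a(s-t)} ω(s) ds` of the path `ω` at time `t`. -/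
noncomputable def discountedPast (a : ℝ) (ω : ℝ → E) (t : ℝ) : E :=
  ∫ s in Iic t, Real.exp (a * (s - t)) • ω s

/-- The pathwise stationary solution `z` of the Langevin equation `dz + a z dt = dω` with rate `a`
and driving path `ω`. -/
noncomputable def langevinSolution (a : ℝ) (ω : ℝ → E) (t : ℝ) : E :=
  ω t - a • discountedPast a ω t

theorem exp_mul_sub_smul (a s t : ℝ) (x : E) :
    Real.exp (a * (s - t)) • x = Real.exp (-(a * t)) • Real.exp (a * s) • x := by
  rw [smul_smul, ← Real.exp_add]
  ring_nf

theorem discountedPast_eq_exp_smul_integral (a : ℝ) (ω : ℝ → E) (t : ℝ) :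
    discountedPast a ω t = Real.exp (-(a * t)) • ∫ s in Iic t, Real.exp (a * s) • ω s := by
  simp only [discountedPast, exp_mul_sub_smul a _ t, integral_smul]

variable {a b : ℝ} {ω : ℝ → E}

theorem integrableOn_Iic_exp_smul (hω : LocallyIntegrable ω)
    (hint : IntegrableOn (fun s ↦ Real.exp (a * s) • ω s) (Iic b)) (t : ℝ) :
    IntegrableOn (fun s ↦ Real.exp (a * s) • ω s) (Iic t) :=
  integrableOn_Iic_of_locallyIntegrable (hω.continuous_smul (by fun_prop)) hint t

theorem integrableOn_Iic_exp_mul_sub_smul (hω : LocallyIntegrable ω)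
    (hint : IntegrableOn (fun s ↦ Real.exp (a * s) • ω s) (Iic b)) (t : ℝ) :
    IntegrableOn (fun s ↦ Real.exp (a * (s - t)) • ω s) (Iic t) := by
  simp only [exp_mul_sub_smul a _ t]
  exact (integrableOn_Iic_exp_smul hω hint t).smul (Real.exp (-(a * t)))

variable [CompleteSpace E]

theorem hasDerivAt_discountedPast (hω : LocallyIntegrable ω)
    (hint : IntegrableOn (fun s ↦ Real.exp (a * s) • ω s) (Iic b)) {t : ℝ}
    (hcont : ContinuousAt ω t) :
    HasDerivAt (discountedPast a ω) (langevinSolution a ω t) t := by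
  have hintegral : HasDerivAt (fun u ↦ ∫ s in Iic u, Real.exp (a * s) • ω s)
      (Real.exp (a * t) • ω t) t :=
    hasDerivAt_integral_Iic (integrableOn_Iic_exp_smul hω hint (t + 1)) (lt_add_one t)
      (by fun_prop)
  have hexp : HasDerivAt (fun u ↦ Real.exp (-(a * u))) (Real.exp (-(a * t)) * -a) t := by
    simpa using ((hasDerivAt_id t).const_mul a).neg.exp
  rw [funext (discountedPast_eq_exp_smul_integral a ω)]
  refine (hexp.smul hintegral).congr_deriv ?_
  rw [← exp_mul_sub_smul, sub_self, mul_zero, Real.exp_zero, one_smul, mul_comm, mul_smul,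
    ← discountedPast_eq_exp_smul_integral, neg_smul, ← sub_eq_add_neg, langevinSolution]

theorem continuous_langevinSolution (hω : Continuous ω)
    (hint : IntegrableOn (fun s ↦ Real.exp (a * s) • ω s) (Iic b)) :
    Continuous (langevinSolution a ω) := by
  have hpast : Continuous (discountedPast a ω) := continuous_iff_continuousAt.2 fun _ ↦
    (hasDerivAt_discountedPast hω.locallyIntegrable hint hω.continuousAt).continuousAt
  exact hω.sub (hpast.const_smul a)

theorem integral_langevinSolution (hω : Continuous ω)
    (hint : IntegrableOn (fun s ↦ Real.exp (a * s) • ω s) (Iic b)) (u t : ℝ) :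
    ∫ s in u..t, langevinSolution a ω s = discountedPast a ω t - discountedPast a ω u :=
  intervalIntegral.integral_eq_sub_of_hasDerivAt
    (fun _ _ ↦ hasDerivAt_discountedPast hω.locallyIntegrable hint hω.continuousAt)
    ((continuous_langevinSolution hω hint).intervalIntegrable u t)

theorem langevinSolution_add_smul_integral (hω : Continuous ω)
    (hint : IntegrableOn (fun s ↦ Real.exp (a * s) • ω s) (Iic b)) (u t : ℝ) :
    langevinSolution a ω t + a • ∫ s in u..t, langevinSolution a ω s =
      langevinSolution a ω u + ω t - ω u := by
  rw [integral_langevinSolution hω hint, langevinSolution, langevinSolution]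
  module

theorem stmt_6_general (hω : Continuous ω)
    (hint : IntegrableOn (fun s ↦ Real.exp (a * s) • ω s) (Iic b)) :
    (∀ t, IntegrableOn (fun s ↦ Real.exp (a * (s - t)) • ω s) (Iic t)) ∧
    Continuous (langevinSolution a ω) ∧
    ∀ u t, langevinSolution a ω t + a • ∫ s in u..t, langevinSolution a ω s =
      langevinSolution a ω u + ω t - ω u :=
  ⟨integrableOn_Iic_exp_mul_sub_smul hω.locallyIntegrable hint,
    continuous_langevinSolution hω hint, langevinSolution_add_smul_integral hω hint⟩

end Langevin

/-- Pathwise, `z_ω` is the stationary solution of the Langevin equation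
`dz + z dt = dω`. -/
theorem stmt_6 (ω : ℝ → ℝ) (hω : Continuous ω)
    (hint : IntegrableOn (fun s => Real.exp s * ω s) (Set.Iic 0))
    (zω : ℝ → ℝ)
    (hzω : ∀ t, zω t = ω t - ∫ s in Set.Iic t, Real.exp (s - t) * ω s) :
    (∀ t : ℝ, IntegrableOn (fun s => Real.exp (s - t) * ω s) (Set.Iic t)) ∧
    Continuous zω ∧
    ∀ t : ℝ, zω t + (∫ s in (0:ℝ)..t, zω s) = zω 0 + ω t - ω 0 := by
  obtain rfl : zω = langevinSolution 1 ω :=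
    funext fun t ↦ by simp [hzω, langevinSolution, discountedPast]
  have h := stmt_6_general (a := 1) hω (by simpa using hint)
  exact ⟨by simpa using h.1, h.2.1, by simpa using h.2.2 0⟩
end

section
/- Let ω : ℝ → ℝ be continuous with ω(t)/t → 0 as t → +∞ and as t → −∞ (in particular s ↦ e^s·ω(s) is integrable on (−∞, 0]), and define z_ω(t) = ω(t) − ∫_{−∞}^t e^{s−t}·ω(s) ds. Then z_ω(t)/t → 0 as t → +∞ and as t → −∞. -/
open MeasureTheory Filter

open Asymptotics Set Topology

/-!
Multiplying the memory integral `∫ s in Iic t, exp (s - t) • ω s` by `exp t` gives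
`∫ s in Iic t, exp s • ω s`. Since `ω` is negligible against `1 + |s|`, a L'Hôpital-type comparison
makes this integral negligible against `∫ s in Iic t, exp s * (1 + |s|)`, which lies between `exp t`
and `exp t * (5 + |t|)`. The lower bound absorbs the contribution of bounded times as `t → +∞`; the
upper bound, divided by `exp t`, leaves `o(t)` at both ends.
-/

section Sublinear

theorem isLittleO_id_iff_tendsto_div {𝕜 : Type*} [NormedField 𝕜] {f : 𝕜 → 𝕜} {l : Filter 𝕜}
    (hl : ∀ᶠ t in l, t ≠ 0) : f =o[l] id ↔ Tendsto (fun t => f t / t) l (𝓝 0) :=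
  isLittleO_iff_tendsto' (hl.mono fun _ ht h => absurd h ht)

theorem isBigO_const_add_abs_id {l : Filter ℝ} (hl : Tendsto (fun t => |t|) l atTop) (c : ℝ) :
    (fun t => c + |t|) =O[l] id :=
  (isLittleO_const_left.2 (Or.inr hl)).isBigO.add (isBigO_refl id l).norm_left

end Sublinear

section IntegralComparison

variable {α E F : Type*} [MeasurableSpace α] {μ : Measure α} [NormedAddCommGroup E]
  [NormedSpace ℝ E] [NormedAddCommGroup F] {f : α → E} {g : α → F}

theorem norm_setIntegral_le_mul_setIntegral_norm {S : Set α} (hS : MeasurableSet S) {c : ℝ}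
    (hfg : ∀ s ∈ S, ‖f s‖ ≤ c * ‖g s‖) (hg : IntegrableOn g S μ) :
    ‖∫ s in S, f s ∂μ‖ ≤ c * ∫ s in S, ‖g s‖ ∂μ := by
  rw [← integral_const_mul]
  exact norm_integral_le_of_norm_le (hg.norm.const_mul c) (ae_restrict_of_forall_mem hS hfg)

variable [TopologicalSpace α] [LinearOrder α] [OrderClosedTopology α] [OpensMeasurableSpace α]

theorem isLittleO_setIntegral_Iic_atBot {a : α} (hfg : f =o[atBot] g)
    (hg : IntegrableOn g (Iic a) μ) :
    (fun t => ∫ s in Iic t, f s ∂μ) =o[atBot] fun t => ∫ s in Iic t, ‖g s‖ ∂μ := by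
  have : Nonempty α := ⟨a⟩
  refine isLittleO_iff.2 fun c hc => ?_
  obtain ⟨T, hT⟩ := eventually_atBot.1 (isLittleO_iff.1 hfg hc)
  filter_upwards [eventually_le_atBot T, eventually_le_atBot a] with t htT hta
  calc ‖∫ s in Iic t, f s ∂μ‖
      ≤ c * ∫ s in Iic t, ‖g s‖ ∂μ :=
        norm_setIntegral_le_mul_setIntegral_norm measurableSet_Iic
          (fun s hs => hT s (le_trans hs htT)) (hg.mono_set (Iic_subset_Iic.2 hta))
    _ ≤ c * ‖∫ s in Iic t, ‖g s‖ ∂μ‖ := by gcongr; exact Real.le_norm_self _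

theorem isLittleO_setIntegral_Iic_atTop [Nonempty α] (hfg : f =o[atTop] g)
    (hf : ∀ t, IntegrableOn f (Iic t) μ) (hg : ∀ t, IntegrableOn g (Iic t) μ)
    (hg_top : Tendsto (fun t => ∫ s in Iic t, ‖g s‖ ∂μ) atTop atTop) :
    (fun t => ∫ s in Iic t, f s ∂μ) =o[atTop] fun t => ∫ s in Iic t, ‖g s‖ ∂μ := by
  refine isLittleO_iff.2 fun c hc => ?_
  obtain ⟨T, hT⟩ := eventually_atTop.1 (isLittleO_iff.1 hfg (half_pos hc))
  have past : ∀ᶠ t in atTop, ‖∫ s in Iic T, f s ∂μ‖ ≤ c / 2 * ∫ s in Iic t, ‖g s‖ ∂μ :=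
    (hg_top.const_mul_atTop (half_pos hc)).eventually_ge_atTop _
  filter_upwards [eventually_ge_atTop T, past] with t hTt hpast
  have recent : ‖∫ s in Ioc T t, f s ∂μ‖ ≤ c / 2 * ∫ s in Iic t, ‖g s‖ ∂μ :=
    calc ‖∫ s in Ioc T t, f s ∂μ‖
        ≤ c / 2 * ∫ s in Ioc T t, ‖g s‖ ∂μ :=
          norm_setIntegral_le_mul_setIntegral_norm measurableSet_Ioc
            (fun s hs => hT s hs.1.le) ((hg t).mono_set Ioc_subset_Iic_self)
      _ ≤ c / 2 * ∫ s in Iic t, ‖g s‖ ∂μ := by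
          refine mul_le_mul_of_nonneg_left ?_ (half_pos hc).le
          exact setIntegral_mono_set (hg t).norm (ae_of_all _ fun s => norm_nonneg _)
            Ioc_subset_Iic_self.eventuallyLE
  have split : ∫ s in Iic t, f s ∂μ = (∫ s in Iic T, f s ∂μ) + ∫ s in Ioc T t, f s ∂μ := by
    rw [← Iic_union_Ioc_eq_Iic hTt]
    exact setIntegral_union (Iic_disjoint_Ioc le_rfl) measurableSet_Ioc (hf T)
      ((hf t).mono_set Ioc_subset_Iic_self)
  calc ‖∫ s in Iic t, f s ∂μ‖
      ≤ ‖∫ s in Iic T, f s ∂μ‖ + ‖∫ s in Ioc T t, f s ∂μ‖ := split ▸ norm_add_le _ _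
    _ ≤ c * ∫ s in Iic t, ‖g s‖ ∂μ := by linarith
    _ ≤ c * ‖∫ s in Iic t, ‖g s‖ ∂μ‖ := by gcongr; exact Real.le_norm_self _

end IntegralComparison

section ExpWeight

theorem norm_exp_mul_one_add_abs (s : ℝ) :
    ‖Real.exp s * (1 + |s|)‖ = Real.exp s * (1 + |s|) :=
  Real.norm_of_nonneg (by positivity)

theorem exp_mul_one_add_abs_le {s t : ℝ} (hst : s ≤ t) :
    Real.exp s * (1 + |s|) ≤
      (1 + |t|) * Real.exp s + 2 * Real.exp (t / 2) * Real.exp (1 / 2 * s) := by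
  have abs_le : |s| ≤ |t| + (t - s) := by
    have := abs_sub_abs_le_abs_sub s t
    rw [abs_sub_comm, abs_of_nonneg (sub_nonneg.2 hst)] at this
    linarith
  have gap_le : t - s ≤ 2 * Real.exp ((t - s) / 2) := by
    linarith [Real.add_one_le_exp ((t - s) / 2)]
  have exp_mul : Real.exp s * Real.exp ((t - s) / 2) = Real.exp (t / 2) * Real.exp (1 / 2 * s) := by
    rw [← Real.exp_add, ← Real.exp_add]
    ring_nf
  calc Real.exp s * (1 + |s|)
      ≤ Real.exp s * (1 + |t| + 2 * Real.exp ((t - s) / 2)) :=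
        mul_le_mul_of_nonneg_left (by linarith) (Real.exp_pos s).le
    _ = (1 + |t|) * Real.exp s + 2 * Real.exp (t / 2) * Real.exp (1 / 2 * s) := by
        linear_combination 2 * exp_mul

theorem integrableOn_exp_add_exp_half_Iic (a b t : ℝ) :
    IntegrableOn (fun s => a * Real.exp s + b * Real.exp (1 / 2 * s)) (Iic t) :=
  ((integrableOn_exp_Iic t).const_mul a).add
    ((integrableOn_exp_mul_Iic one_half_pos t).const_mul b)

theorem integrableOn_exp_mul_one_add_abs_Iic (t : ℝ) :
    IntegrableOn (fun s => Real.exp s * (1 + |s|)) (Iic t) := by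
  refine (integrableOn_exp_add_exp_half_Iic (1 + |t|) (2 * Real.exp (t / 2)) t).mono'
    (by fun_prop) (ae_restrict_of_forall_mem measurableSet_Iic fun s hs => ?_)
  rw [norm_exp_mul_one_add_abs]
  exact exp_mul_one_add_abs_le hs

theorem setIntegral_exp_mul_one_add_abs_le (t : ℝ) :
    ∫ s in Iic t, Real.exp s * (1 + |s|) ≤ Real.exp t * (5 + |t|) := by
  have exp_half : Real.exp (t / 2) * Real.exp (1 / 2 * t) = Real.exp t := by
    rw [← Real.exp_add]
    ring_nf
  calc ∫ s in Iic t, Real.exp s * (1 + |s|)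
      ≤ ∫ s in Iic t, ((1 + |t|) * Real.exp s + 2 * Real.exp (t / 2) * Real.exp (1 / 2 * s)) :=
        setIntegral_mono_on (integrableOn_exp_mul_one_add_abs_Iic t)
          (integrableOn_exp_add_exp_half_Iic _ _ t) measurableSet_Iic
          fun s hs => exp_mul_one_add_abs_le hs
    _ = (1 + |t|) * Real.exp t + 2 * Real.exp (t / 2) * (Real.exp (1 / 2 * t) / (1 / 2)) := by
        rw [integral_add ((integrableOn_exp_Iic t).const_mul _)
          ((integrableOn_exp_mul_Iic one_half_pos t).const_mul _), integral_const_mul,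
          integral_const_mul, integral_exp_Iic, integral_exp_mul_Iic one_half_pos]
    _ = Real.exp t * (5 + |t|) := by linear_combination 4 * exp_half

theorem exp_le_setIntegral_exp_mul_one_add_abs (t : ℝ) :
    Real.exp t ≤ ∫ s in Iic t, Real.exp s * (1 + |s|) := by
  rw [← integral_exp_Iic t]
  exact setIntegral_mono (integrableOn_exp_Iic t) (integrableOn_exp_mul_one_add_abs_Iic t)
    fun s => le_mul_of_one_le_right (Real.exp_pos s).le (by simp)

end ExpWeight

section ExpMovingAverage

variable {E : Type*} [NormedAddCommGroup E] [NormedSpace ℝ E] {ω : ℝ → E}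

theorem integrableOn_smul_Iic_of_locallyIntegrable {φ : ℝ → ℝ} (hφ : Continuous φ)
    (hω : LocallyIntegrable ω) {a : ℝ} (ha : IntegrableOn (fun s => φ s • ω s) (Iic a)) (t : ℝ) :
    IntegrableOn (fun s => φ s • ω s) (Iic t) :=
  integrableOn_Iic_iff_integrableAtFilter_atBot.2
    ⟨(integrableOn_Iic_iff_integrableAtFilter_atBot.1 ha).1,
      (hω.locallyIntegrableOn _).continuousOn_smul isLocallyClosed_Iic hφ.continuousOn⟩

/-- The exponential moving average of the past of `ω` at time `t`: the memory term of the stationary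
Ornstein–Uhlenbeck process `ω t - expMovingAverage ω t`. -/
noncomputable def expMovingAverage (ω : ℝ → E) (t : ℝ) : E :=
  ∫ s in Iic t, Real.exp (s - t) • ω s

theorem expMovingAverage_eq_smul (ω : ℝ → E) (t : ℝ) :
    expMovingAverage ω t = Real.exp (-t) • ∫ s in Iic t, Real.exp s • ω s := by
  simp only [expMovingAverage, ← integral_smul, smul_smul, ← Real.exp_add, neg_add_eq_sub]

theorem isLittleO_exp_smul_of_isLittleO_id {l : Filter ℝ} (hω : ω =o[l] id) :
    (fun s => Real.exp s • ω s) =o[l] fun s => Real.exp s * (1 + |s|) := by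
  have id_isBigO : (id : ℝ → ℝ) =O[l] fun s => 1 + |s| :=
    isBigO_of_le l fun s => by
      rw [id, Real.norm_eq_abs, Real.norm_of_nonneg (by positivity)]
      linarith
  exact (isBigO_refl Real.exp l).smul_isLittleO (hω.trans_isBigO id_isBigO)

theorem expMovingAverage_isLittleO_id_of_setIntegral {l : Filter ℝ}
    (hl : Tendsto (fun t => |t|) l atTop)
    (hω : (fun t => ∫ s in Iic t, Real.exp s • ω s) =o[l]
      fun t => ∫ s in Iic t, Real.exp s * (1 + |s|)) :
    expMovingAverage ω =o[l] id := by
  have weight_isBigO : (fun t => ∫ s in Iic t, Real.exp s * (1 + |s|)) =O[l]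
      fun t => Real.exp t * (5 + |t|) :=
    isBigO_of_le l fun t => by
      rw [Real.norm_of_nonneg (integral_nonneg fun s => by positivity),
        Real.norm_of_nonneg (by positivity)]
      exact setIntegral_exp_mul_one_add_abs_le t
  have scaled := (isBigO_refl (fun t => Real.exp (-t)) l).smul_isLittleO
    (hω.trans_isBigO weight_isBigO)
  simp only [← expMovingAverage_eq_smul, smul_eq_mul, ← mul_assoc, ← Real.exp_add,
    neg_add_cancel, Real.exp_zero, one_mul] at scaled
  exact scaled.trans_isBigO (isBigO_const_add_abs_id hl 5)

theorem expMovingAverage_isLittleO_id_atBot (hω : ω =o[atBot] id) :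
    expMovingAverage ω =o[atBot] id := by
  refine expMovingAverage_isLittleO_id_of_setIntegral tendsto_abs_atBot_atTop ?_
  simpa only [norm_exp_mul_one_add_abs] using
    isLittleO_setIntegral_Iic_atBot (isLittleO_exp_smul_of_isLittleO_id hω)
      (integrableOn_exp_mul_one_add_abs_Iic 0)

theorem expMovingAverage_isLittleO_id_atTop (hω : ω =o[atTop] id)
    (hint : ∀ t, IntegrableOn (fun s => Real.exp s • ω s) (Iic t)) :
    expMovingAverage ω =o[atTop] id := by
  refine expMovingAverage_isLittleO_id_of_setIntegral tendsto_abs_atTop_atTop ?_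
  have weight_atTop : Tendsto (fun t => ∫ s in Iic t, Real.exp s * (1 + |s|)) atTop atTop :=
    tendsto_atTop_mono exp_le_setIntegral_exp_mul_one_add_abs Real.tendsto_exp_atTop
  simpa only [norm_exp_mul_one_add_abs] using
    isLittleO_setIntegral_Iic_atTop (isLittleO_exp_smul_of_isLittleO_id hω) hint
      integrableOn_exp_mul_one_add_abs_Iic
      (by simpa only [norm_exp_mul_one_add_abs] using weight_atTop)

end ExpMovingAverage

theorem stmt_7_general {E : Type*} [NormedAddCommGroup E] [NormedSpace ℝ E] [CompleteSpace E]
    (ω : ℝ → E) (hω : LocallyIntegrable ω)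
    (hint : IntegrableOn (fun s => Real.exp s • ω s) (Iic 0)) :
    (ω =o[atTop] id → (fun t => ω t - expMovingAverage ω t) =o[atTop] id) ∧
      (ω =o[atBot] id → (fun t => ω t - expMovingAverage ω t) =o[atBot] id) :=
  ⟨fun h => h.sub (expMovingAverage_isLittleO_id_atTop h
      (integrableOn_smul_Iic_of_locallyIntegrable Real.continuous_exp hω hint)),
    fun h => h.sub (expMovingAverage_isLittleO_id_atBot h)⟩

/-- Sublinear growth of the path `ω` implies sublinear growth of the stationary
Ornstein–Uhlenbeck process `z_ω` driven by `ω`. -/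
theorem stmt_7 (ω : ℝ → ℝ) (hω : Continuous ω)
    (hsub_top : Tendsto (fun t => ω t / t) atTop (nhds 0))
    (hsub_bot : Tendsto (fun t => ω t / t) atBot (nhds 0))
    (hint : IntegrableOn (fun s => Real.exp s * ω s) (Set.Iic 0))
    (zω : ℝ → ℝ)
    (hzω : ∀ t, zω t = ω t - ∫ s in Set.Iic t, Real.exp (s - t) * ω s) :
    Tendsto (fun t => zω t / t) atTop (nhds 0) ∧
    Tendsto (fun t => zω t / t) atBot (nhds 0) := by
  obtain rfl : zω = fun t => ω t - expMovingAverage ω t := funext hzω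
  rw [← isLittleO_id_iff_tendsto_div (eventually_ne_atTop 0)] at hsub_top ⊢
  rw [← isLittleO_id_iff_tendsto_div (eventually_ne_atBot 0)] at hsub_bot ⊢
  exact (stmt_7_general ω hω.locallyIntegrable hint).imp (· hsub_top) (· hsub_bot)
end

section
/- Let a > 0 and let f : ℝ → ℝ be Lipschitz with constant L_f. Define F : ℝ² → ℝ² by F(x,y) = (0, f(x)). Then F is Lipschitz with constant 2L_f/a with respect to the norm ‖(x,y)‖_a = (2·[(a²/4)·x² + ((a/2)x + y)²])^{1/2}, i.e. ‖F(p) − F(q)‖_a ≤ (2L_f/a)·‖p − q‖_a for all p, q ∈ ℝ². -/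
/-! The map `(x, y) ↦ (0, f x)` reads only the first component and writes only the second. The
adapted norm weighs a pure second component by `√2`, but controls a first component with weight
`√2 * |a| / 2`; the Lipschitz constant of `f` is multiplied by the quotient `2 / |a|` of the two. -/

open scoped NNReal

section AdaptedNorm

variable {E : Type*} [SeminormedAddCommGroup E] [NormedSpace ℝ E]

/-- The norm `‖(x, y)‖_a` adapted to the first-order formulation, with damping `a`, of the damped
wave equation. The components lie in an arbitrary seminormed space, so for `a = 0`, or if `E` is
not separated, it may vanish on nonzero vectors. -/
noncomputable def adaptedNorm (a : ℝ) (p : E × E) : ℝ :=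
  √(2 * (a ^ 2 / 4 * ‖p.1‖ ^ 2 + ‖(a / 2) • p.1 + p.2‖ ^ 2))

theorem adaptedNorm_real (a : ℝ) (p : ℝ × ℝ) :
    adaptedNorm a p = √(2 * (a ^ 2 / 4 * p.1 ^ 2 + (a / 2 * p.1 + p.2) ^ 2)) := by
  simp only [adaptedNorm, Real.norm_eq_abs, sq_abs, smul_eq_mul]

theorem adaptedNorm_zero_left (a : ℝ) (y : E) : adaptedNorm a (0, y) = √2 * ‖y‖ := by
  simp [adaptedNorm]

theorem sqrt_two_mul_norm_fst_le_adaptedNorm (a : ℝ) (p : E × E) :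
    √2 * (|a| / 2 * ‖p.1‖) ≤ adaptedNorm a p := by
  refine Real.le_sqrt_of_sq_le ?_
  calc (√2 * (|a| / 2 * ‖p.1‖)) ^ 2 = 2 * (a ^ 2 / 4 * ‖p.1‖ ^ 2) := by
        rw [mul_pow, mul_pow, div_pow, Real.sq_sqrt zero_le_two, sq_abs]
        ring
    _ ≤ 2 * (a ^ 2 / 4 * ‖p.1‖ ^ 2 + ‖(a / 2) • p.1 + p.2‖ ^ 2) := by
        gcongr
        exact le_add_of_nonneg_right (sq_nonneg _)

theorem stmt_11_general {a : ℝ} (ha : a ≠ 0) {K : ℝ≥0} {f : E → E} (hf : LipschitzWith K f)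
    (p q : E × E) :
    adaptedNorm a ((0, f p.1) - (0, f q.1)) ≤ 2 * K / |a| * adaptedNorm a (p - q) :=
  calc adaptedNorm a ((0, f p.1) - (0, f q.1))
      = √2 * ‖f p.1 - f q.1‖ := by rw [Prod.mk_sub_mk, sub_zero, adaptedNorm_zero_left]
    _ ≤ √2 * (K * ‖p.1 - q.1‖) := by
        gcongr
        exact hf.norm_sub_le p.1 q.1
    _ = 2 * K / |a| * (√2 * (|a| / 2 * ‖(p - q).1‖)) := by
        rw [Prod.fst_sub]
        field_simp
    _ ≤ 2 * K / |a| * adaptedNorm a (p - q) := by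
        gcongr
        exact sqrt_two_mul_norm_fst_le_adaptedNorm a (p - q)

end AdaptedNorm

/-- In the adapted norm, the nonlinearity `(x, y) ↦ (0, f(x))` of the damped wave
equation has Lipschitz constant `2 L_f / a`. -/
theorem stmt_11 (a Lf : ℝ) (ha : 0 < a) (f : ℝ → ℝ)
    (hf : ∀ x y : ℝ, |f x - f y| ≤ Lf * |x - y|)
    (na : (ℝ × ℝ) → ℝ)
    (hna : ∀ p : ℝ × ℝ,
      na p = Real.sqrt (2 * ((a ^ 2 / 4) * p.1 ^ 2 + ((a / 2) * p.1 + p.2) ^ 2)))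
    (F : (ℝ × ℝ) → (ℝ × ℝ)) (hF : ∀ p : ℝ × ℝ, F p = (0, f p.1)) :
    ∀ p q : ℝ × ℝ, na (F p - F q) ≤ (2 * Lf / a) * na (p - q) := by
  have hLf : 0 ≤ Lf := by simpa using (abs_nonneg _).trans (hf 1 0)
  lift Lf to ℝ≥0 using hLf
  have hLip : LipschitzWith Lf f := .of_dist_le_mul hf
  intro p q
  simpa only [hna, hF, adaptedNorm_real, abs_of_pos ha] using
    stmt_11_general ha.ne' hLip p q
end

section
/- In the Lyapunov–Perron setting, let additionally h : H_c → H_s be Lipschitz with constant L_h ≥ 0, and assume L·(1/(η+β) − 1/(α+η)) + L_h < 1. Then for every T_f > 0 and every ξ ∈ H_c there exists a unique continuous function v = (v_c, v_s) : [0, T_f] → H_c × H_s satisfying, for all t ∈ [0, T_f]: v_c(t) = S_c(t − T_f)·e^{∫_{T_f}^t z(s)ds}·ξ + ∫_{T_f}^t S_c(t−τ)·e^{∫_τ^t z(s)ds}·g_c(τ, v(τ)) dτ and v_s(t) = S_s(t)·e^{∫_0^t z(s)ds}·h(v_c(0)) + ∫_0^t S_s(t−τ)·e^{∫_τ^t z(s)ds}·g_s(τ,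 v(τ)) dτ. (This is the backward solvability, on any finite time interval, of the system restricted to the Lipschitz manifold given as the graph of h, with the center component prescribed at the final time T_f.) -/
open MeasureTheory Set

/-! Measured against the weight `exp (η t + ∫₀ᵗ z)`, both propagators become pure exponentials: the
stable one decays forward in time at rate `η + β > 0`, the center one backward in time at rate
`α + η < 0`. Integrating these exponentials away from the respective base points (`0` for the stable
component, `T` for the center component) gives `1 / (η + β)` and `-1 / (α + η)`, independently of
`T`, so the Lyapunov–Perron map is a contraction for the weighted supremum norm on `[0, T]` and
Banach's fixed point theorem applies. -/

open WithLp Function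
open scoped NNReal ENNReal

section WeightedContraction

variable {X E : Type*} [TopologicalSpace X] [NormedAddCommGroup E] [NormedSpace ℝ E]
  [CompleteSpace E] {K : ℝ≥0}

theorem existsUnique_isFixedPt_of_weighted_contraction [CompactSpace X] {ρ : C(X, ℝ)}
    (hρ : ∀ t, 0 < ρ t) (hK : K < 1) {Φ : C(X, E) → C(X, E)}
    (hΦ : ∀ u v d, (∀ t, ‖u t - v t‖ ≤ d * ρ t) → ∀ t, ‖Φ u t - Φ v t‖ ≤ K * d * ρ t) :
    ∃! u, IsFixedPt Φ u := by
  obtain ⟨w, rfl⟩ := (ContinuousMap.isUnit_iff_forall_ne_zero ρ).2 fun t ↦ (hρ t).ne'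
  let Ψ : C(X, E) → C(X, E) := fun u ↦ w⁻¹ • Φ (w • u)
  have norm_smul_sub (u v : C(X, E)) (t : X) :
      ‖(w • u) t - (w • v) t‖ = dist (u t) (v t) * w.val t := by
    change ‖w.val t • u t - w.val t • v t‖ = _
    rw [← smul_sub, norm_smul, Real.norm_of_nonneg (hρ t).le, dist_eq_norm, mul_comm]
  have contracting : ContractingWith K Ψ := by
    refine ⟨hK, LipschitzWith.of_dist_le_mul fun u v ↦ ?_⟩
    refine (ContinuousMap.dist_le (by positivity)).2 fun t ↦ le_of_mul_le_mul_right ?_ (hρ t)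
    rw [← norm_smul_sub, smul_inv_smul, smul_inv_smul]
    refine hΦ _ _ _ (fun s ↦ ?_) t
    rw [norm_smul_sub]
    exact mul_le_mul_of_nonneg_right (ContinuousMap.dist_apply_le_dist s) (hρ s).le
  have isFixedPt_iff (u : C(X, E)) : IsFixedPt Ψ u ↔ IsFixedPt Φ (w • u) := inv_smul_eq_iff
  have hu : IsFixedPt Ψ (contracting.fixedPoint Ψ) := contracting.fixedPoint_isFixedPt
  refine ⟨w • contracting.fixedPoint Ψ, (isFixedPt_iff _).1 hu, fun v hv ↦ ?_⟩
  rw [← inv_smul_eq_iff]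
  exact contracting.fixedPoint_unique ((isFixedPt_iff _).2 (by rwa [smul_inv_smul]))

theorem exists_eqOn_fixedPoint_of_weighted_contraction {s : Set X} (hs : IsCompact s) {ρ : X → ℝ}
    (hρ : ContinuousOn ρ s) (hρ_pos : ∀ t ∈ s, 0 < ρ t) (hK : K < 1) {Φ : (X → E) → X → E}
    (hΦ_cont : ∀ u, ContinuousOn u s → ContinuousOn (Φ u) s)
    (hΦ : ∀ u v d, ContinuousOn u s → ContinuousOn v s → (∀ t ∈ s, ‖u t - v t‖ ≤ d * ρ t) →
      ∀ t ∈ s, ‖Φ u t - Φ v t‖ ≤ K * d * ρ t) :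
    ∃ u, ContinuousOn u s ∧ EqOn (Φ u) u s ∧
      ∀ v, ContinuousOn v s → EqOn (Φ v) v s → EqOn u v s := by
  have : CompactSpace s := isCompact_iff_compactSpace.1 hs
  have exists_extension (u : C(s, E)) : ∃ U : X → E, ContinuousOn U s ∧ s.domRestrict U = u := by
    have domRestrict_extend : s.domRestrict (extend Subtype.val u 0) = u :=
      extend_comp Subtype.val_injective _ _
    refine ⟨_, ?_, domRestrict_extend⟩
    rw [continuousOn_iff_continuous_domRestrict, domRestrict_extend]
    exact u.continuous
  choose ext ext_cont domRestrict_ext using exists_extension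
  have ext_apply (u : C(s, E)) (t : s) : ext u t = u t := congrFun (domRestrict_ext u) t
  have Φ_congr {u v : X → E} (hu : ContinuousOn u s) (hv : ContinuousOn v s) (huv : EqOn u v s) :
      EqOn (Φ u) (Φ v) s := fun t ht ↦ by
    simpa [sub_eq_zero] using hΦ u v 0 hu hv (fun τ hτ ↦ by simp [huv hτ]) t ht
  obtain ⟨u, hu, hu_unique⟩ := existsUnique_isFixedPt_of_weighted_contraction
    (ρ := ⟨s.domRestrict ρ, hρ.domRestrict⟩) (fun t ↦ hρ_pos t t.2) hK
    (Φ := fun u ↦ ⟨s.domRestrict (Φ (ext u)), (hΦ_cont _ (ext_cont u)).domRestrict⟩)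
    (fun u v d huv t ↦ hΦ _ _ d (ext_cont u) (ext_cont v)
      (fun τ hτ ↦ by
        simpa only [← ext_apply, ContinuousMap.coe_mk, domRestrict_apply] using huv ⟨τ, hτ⟩) t t.2)
  refine ⟨ext u, ext_cont u, fun t ht ↦ ?_, fun v hv hΦv t ht ↦ ?_⟩
  · rw [ext_apply u ⟨t, ht⟩]
    exact DFunLike.congr_fun hu ⟨t, ht⟩
  · have ext_domRestrict : EqOn (ext ⟨s.domRestrict v, hv.domRestrict⟩) v s :=
      fun τ hτ ↦ ext_apply _ ⟨τ, hτ⟩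
    have hv_fixed := hu_unique ⟨s.domRestrict v, hv.domRestrict⟩ <| ContinuousMap.ext fun τ ↦
      (Φ_congr (ext_cont _) hv ext_domRestrict τ.2).trans (hΦv τ.2)
    rw [← ext_domRestrict ht, hv_fixed]

end WeightedContraction

section IntervalIntegral

variable {E : Type*} [NormedAddCommGroup E] [NormedSpace ℝ E]

theorem continuous_integral_of_continuousOn_uIcc {X : Type*} [TopologicalSpace X]
    [FirstCountableTopology X] {F : X → ℝ → E} {a : ℝ} {b : X → ℝ} (hb : Continuous b)
    (hF : ContinuousOn (uncurry F) {p | p.2 ∈ uIcc a (b p.1)}) :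
    Continuous fun x ↦ ∫ τ in a..b x, F x τ := by
  let clamp : X → ℝ → ℝ := fun x τ ↦ max (min a (b x)) (min (max a (b x)) τ)
  have clamp_mem (x : X) (τ : ℝ) : clamp x τ ∈ uIcc a (b x) :=
    ⟨le_max_left _ _, max_le min_le_max (min_le_left _ _)⟩
  have clamp_eq {x : X} {τ : ℝ} (hτ : τ ∈ uIcc a (b x)) : clamp x τ = τ := by
    simp only [clamp, min_eq_right (show τ ≤ max a (b x) from hτ.2), max_eq_right hτ.1]
  have hG : Continuous (uncurry fun x τ ↦ F x (clamp x τ)) :=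
    hF.comp_continuous (f := fun p : X × ℝ ↦ (p.1, clamp p.1 p.2)) (by fun_prop)
      fun p ↦ clamp_mem p.1 p.2
  refine (intervalIntegral.continuous_parametric_intervalIntegral_of_continuous hG hb).congr
    fun x ↦ intervalIntegral.integral_congr fun τ hτ ↦ ?_
  simp only [clamp_eq hτ]

theorem abs_integral_exp_mul_sub_le {κ a t : ℝ} (hκ : κ ≠ 0) (hat : 0 ≤ κ * (t - a)) :
    |∫ τ in a..t, Real.exp (κ * (τ - t))| ≤ 1 / |κ| := by
  have integral_eq : ∫ τ in a..t, Real.exp (κ * (τ - t)) = (1 - Real.exp (κ * (a - t))) / κ := by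
    simp only [mul_sub]
    rw [intervalIntegral.integral_comp_mul_sub _ hκ, integral_exp, sub_self, Real.exp_zero,
      smul_eq_mul, inv_mul_eq_div]
  have exp_le_one : Real.exp (κ * (a - t)) ≤ 1 := Real.exp_le_one_iff.2 (by linarith)
  rw [integral_eq, abs_div, abs_of_nonneg (sub_nonneg.2 exp_le_one)]
  gcongr
  linarith [Real.exp_pos (κ * (a - t))]

theorem continuous_intervalIntegral_pair {z : ℝ → ℝ}
    (hz : ∀ a b, IntervalIntegrable z volume a b) :
    Continuous fun p : ℝ × ℝ ↦ ∫ r in p.2..p.1, z r := by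
  have hprim := intervalIntegral.continuous_primitive hz 0
  refine ((hprim.comp continuous_fst).sub (hprim.comp continuous_snd)).congr fun p ↦ ?_
  exact intervalIntegral.integral_interval_sub_left (hz 0 p.1) (hz 0 p.2)

end IntervalIntegral

section Duhamel

variable {E : Type*} [NormedAddCommGroup E] [NormedSpace ℝ E]

/-- The Duhamel (variation of constants) formula: the mild solution at time `t` of the linear
equation with propagator `U`, value `x` at the base time `t₀` and forcing `f`. The time `t` may lie
on either side of `t₀`. -/
noncomputable def duhamel (U : ℝ → ℝ → E →L[ℝ] E) (t₀ : ℝ) (x : E) (f : ℝ → E) (t : ℝ) : E :=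
  U t t₀ x + ∫ τ in t₀..t, U t τ (f τ)

/-- A two-parameter family `U t τ`, defined for `t ∈ s` and `τ` between the base time `t₀` and `t`,
that is strongly continuous and decays away from `t₀` at rate `κ` relative to the weight `exp φ`.
Positive `κ` means decay forward in time (`t ≥ t₀` on `s`), negative `κ` decay backward in time. -/
structure HasWeightedDecay (U : ℝ → ℝ → E →L[ℝ] E) (φ : ℝ → ℝ) (κ t₀ : ℝ) (s : Set ℝ) : Prop where
  rate_ne_zero : κ ≠ 0
  rate_mul_nonneg : ∀ t ∈ s, 0 ≤ κ * (t - t₀)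
  continuousOn : ContinuousOn (fun p : (ℝ × ℝ) × E ↦ U p.1.1 p.1.2 p.2)
    {p | p.1.1 ∈ s ∧ p.1.2 ∈ uIcc t₀ p.1.1}
  norm_apply_le : ∀ t ∈ s, ∀ τ ∈ uIcc t₀ t, ∀ y,
    ‖U t τ y‖ ≤ Real.exp (κ * (τ - t) + φ t - φ τ) * ‖y‖

namespace HasWeightedDecay

variable {U : ℝ → ℝ → E →L[ℝ] E} {φ : ℝ → ℝ} {κ t₀ : ℝ} {s : Set ℝ}

theorem norm_apply_le_of_norm_le (hU : HasWeightedDecay U φ κ t₀ s) {t τ : ℝ} (ht : t ∈ s)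
    (hτ : τ ∈ uIcc t₀ t) {y : E} {M : ℝ} (hy : ‖y‖ ≤ M * Real.exp (φ τ)) :
    ‖U t τ y‖ ≤ M * Real.exp (φ t) * Real.exp (κ * (τ - t)) :=
  calc ‖U t τ y‖ ≤ Real.exp (κ * (τ - t) + φ t - φ τ) * ‖y‖ := hU.norm_apply_le t ht τ hτ y
    _ ≤ Real.exp (κ * (τ - t) + φ t - φ τ) * (M * Real.exp (φ τ)) := by gcongr
    _ = M * Real.exp (φ t) * Real.exp (κ * (τ - t)) := by
      rw [Real.exp_sub, Real.exp_add]
      field_simp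

theorem intervalIntegrable (hU : HasWeightedDecay U φ κ t₀ s) {t : ℝ} (ht : t ∈ s) {f : ℝ → E}
    (hf : ContinuousOn f (uIcc t₀ t)) :
    IntervalIntegrable (fun τ ↦ U t τ (f τ)) volume t₀ t :=
  (hU.continuousOn.comp (f := fun τ ↦ ((t, τ), f τ)) (by fun_prop)
    fun _ hτ ↦ ⟨ht, hτ⟩).intervalIntegrable

theorem continuousOn_duhamel (hU : HasWeightedDecay U φ κ t₀ s) (hs : ∀ t ∈ s, uIcc t₀ t ⊆ s)
    (x : E) {f : ℝ → E} (hf : ContinuousOn f s) : ContinuousOn (duhamel U t₀ x f) s := by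
  have homogeneous : ContinuousOn (fun t ↦ U t t₀ x) s :=
    hU.continuousOn.comp (f := fun t ↦ ((t, t₀), x)) (by fun_prop) fun t ht ↦ ⟨ht, left_mem_uIcc⟩
  have forced : Continuous fun t : s ↦ ∫ τ in t₀..t, U t τ (f τ) := by
    refine continuous_integral_of_continuousOn_uIcc (F := fun (t : s) τ ↦ U t τ (f τ))
      continuous_subtype_val ?_
    refine hU.continuousOn.comp (f := fun p : s × ℝ ↦ ((p.1.1, p.2), f p.2)) ?_
      fun p hp ↦ ⟨p.1.2, hp⟩
    exact (by fun_prop : Continuous fun p : s × ℝ ↦ (p.1.1, p.2)).continuousOn.prodMk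
      (hf.comp continuousOn_snd fun p hp ↦ hs p.1 p.1.2 hp)
  exact homogeneous.add (continuousOn_iff_continuous_domRestrict.2 forced)

theorem duhamel_sub (hU : HasWeightedDecay U φ κ t₀ s) {t : ℝ} (ht : t ∈ s) (x y : E)
    {f g : ℝ → E} (hf : ContinuousOn f (uIcc t₀ t)) (hg : ContinuousOn g (uIcc t₀ t)) :
    duhamel U t₀ x f t - duhamel U t₀ y g t = duhamel U t₀ (x - y) (f - g) t := by
  simp only [duhamel, Pi.sub_apply, map_sub]
  rw [intervalIntegral.integral_sub (hU.intervalIntegrable ht hf) (hU.intervalIntegrable ht hg)]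
  abel

theorem norm_duhamel_le (hU : HasWeightedDecay U φ κ t₀ s) {t : ℝ} (ht : t ∈ s) {x : E} {c : ℝ}
    (hx : ‖x‖ ≤ c * Real.exp (φ t₀)) {f : ℝ → E} {M : ℝ}
    (hf : ∀ τ ∈ uIcc t₀ t, ‖f τ‖ ≤ M * Real.exp (φ τ)) :
    ‖duhamel U t₀ x f t‖ ≤ (c + M / |κ|) * Real.exp (φ t) := by
  have hc : 0 ≤ c := nonneg_of_mul_nonneg_left ((norm_nonneg x).trans hx) (Real.exp_pos _)
  have hM : 0 ≤ M := nonneg_of_mul_nonneg_left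
    ((norm_nonneg (f t₀)).trans (hf t₀ left_mem_uIcc)) (Real.exp_pos _)
  have decay : Real.exp (κ * (t₀ - t)) ≤ 1 :=
    Real.exp_le_one_iff.2 (by linarith [hU.rate_mul_nonneg t ht])
  have homogeneous : ‖U t t₀ x‖ ≤ c * Real.exp (φ t) :=
    (hU.norm_apply_le_of_norm_le ht left_mem_uIcc hx).trans
      (mul_le_of_le_one_right (by positivity) decay)
  have forced : ‖∫ τ in t₀..t, U t τ (f τ)‖ ≤ M * Real.exp (φ t) * (1 / |κ|) :=
    calc ‖∫ τ in t₀..t, U t τ (f τ)‖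
        ≤ |∫ τ in t₀..t, M * Real.exp (φ t) * Real.exp (κ * (τ - t))| := by
          refine intervalIntegral.norm_integral_le_abs_of_norm_le
            ((ae_restrict_mem measurableSet_uIoc).mono fun τ hτ ↦ ?_)
            (Continuous.intervalIntegrable (by fun_prop) _ _)
          have hτ' := uIoc_subset_uIcc hτ
          exact hU.norm_apply_le_of_norm_le ht hτ' (hf τ hτ')
      _ = M * Real.exp (φ t) * |∫ τ in t₀..t, Real.exp (κ * (τ - t))| := by
          rw [intervalIntegral.integral_const_mul, abs_mul, abs_of_nonneg (by positivity)]
      _ ≤ M * Real.exp (φ t) * (1 / |κ|) := by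
          gcongr
          exact abs_integral_exp_mul_sub_le hU.rate_ne_zero (hU.rate_mul_nonneg t ht)
  calc ‖duhamel U t₀ x f t‖ ≤ c * Real.exp (φ t) + M * Real.exp (φ t) * (1 / |κ|) :=
        norm_add_le_of_le homogeneous forced
    _ = (c + M / |κ|) * Real.exp (φ t) := by ring

end HasWeightedDecay

end Duhamel

theorem norm_le_norm_fst_add_norm_snd {p : ℝ≥0∞} [Fact (1 ≤ p)] {E F : Type*}
    [SeminormedAddCommGroup E] [SeminormedAddCommGroup F] (x : WithLp p (E × F)) :
    ‖x‖ ≤ ‖x.fst‖ + ‖x.snd‖ := by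
  have decomposition : x = toLp p (x.fst, 0) + toLp p (0, x.snd) :=
    ofLp_injective p (Prod.ext (add_zero _).symm (zero_add _).symm)
  calc ‖x‖ = ‖toLp p (x.fst, (0 : F)) + toLp p ((0 : E), x.snd)‖ := congrArg _ decomposition
    _ ≤ ‖x.fst‖ + ‖x.snd‖ := norm_add_le_of_le (norm_toLp_fst p E F _).le
      (norm_toLp_snd p E F _).le

section LyapunovPerron

variable {p : ℝ≥0∞} {Ec Es : Type*}
  [NormedAddCommGroup Ec] [NormedSpace ℝ Ec] [NormedAddCommGroup Es] [NormedSpace ℝ Es]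

/-- The Lyapunov–Perron map on `[a, b]`: the center component is prescribed to be `ξ` at the final
time `b`, while the stable component starts at time `a` on the graph of `h`. -/
noncomputable def lyapunovPerronMap (Uc : ℝ → ℝ → Ec →L[ℝ] Ec) (Us : ℝ → ℝ → Es →L[ℝ] Es)
    (gc : ℝ → WithLp p (Ec × Es) → Ec) (gs : ℝ → WithLp p (Ec × Es) → Es) (h : Ec → Es)
    (a b : ℝ) (ξ : Ec) (v : ℝ → WithLp p (Ec × Es)) (t : ℝ) : WithLp p (Ec × Es) :=
  toLp p (duhamel Uc b ξ (fun τ ↦ gc τ (v τ)) t,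
    duhamel Us a (h (v a).fst) (fun τ ↦ gs τ (v τ)) t)

/-- `(vc, vs)` is a continuous solution on `[a, b]` of the Lyapunov–Perron integral equations with
center component `ξ` at time `b` and initial point on the graph of `h`. -/
def IsMildSolution (Uc : ℝ → ℝ → Ec →L[ℝ] Ec) (Us : ℝ → ℝ → Es →L[ℝ] Es)
    (gc : ℝ → WithLp p (Ec × Es) → Ec) (gs : ℝ → WithLp p (Ec × Es) → Es) (h : Ec → Es)
    (a b : ℝ) (ξ : Ec) (vc : ℝ → Ec) (vs : ℝ → Es) : Prop :=
  ContinuousOn vc (Icc a b) ∧ ContinuousOn vs (Icc a b) ∧ ∀ t ∈ Icc a b,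
    vc t = duhamel Uc b ξ (fun τ ↦ gc τ (toLp p (vc τ, vs τ))) t ∧
    vs t = duhamel Us a (h (vc a)) (fun τ ↦ gs τ (toLp p (vc τ, vs τ))) t

variable {Uc : ℝ → ℝ → Ec →L[ℝ] Ec} {Us : ℝ → ℝ → Es →L[ℝ] Es}
  {gc : ℝ → WithLp p (Ec × Es) → Ec} {gs : ℝ → WithLp p (Ec × Es) → Es} {h : Ec → Es}
  {φ : ℝ → ℝ} {κc κs a b : ℝ}

theorem isMildSolution_iff_eqOn_lyapunovPerronMap [Fact (1 ≤ p)] {ξ : Ec}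
    {v : ℝ → WithLp p (Ec × Es)} :
    IsMildSolution Uc Us gc gs h a b ξ (fun t ↦ (v t).fst) (fun t ↦ (v t).snd) ↔
      ContinuousOn v (Icc a b) ∧
        EqOn (lyapunovPerronMap Uc Us gc gs h a b ξ v) v (Icc a b) := by
  have continuousOn_iff : ContinuousOn v (Icc a b) ↔
      ContinuousOn (fun t ↦ (v t).fst) (Icc a b) ∧ ContinuousOn (fun t ↦ (v t).snd) (Icc a b) :=
    ⟨fun hv ↦ ⟨by fun_prop, by fun_prop⟩,
      fun hv ↦ (prod_continuous_toLp p Ec Es).comp_continuousOn (hv.1.prodMk hv.2)⟩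
  have eq_iff (x : Ec) (y : Es) (w : WithLp p (Ec × Es)) :
      w.fst = x ∧ w.snd = y ↔ toLp p (x, y) = w :=
    ⟨by rintro ⟨rfl, rfl⟩; rfl, by rintro rfl; exact ⟨rfl, rfl⟩⟩
  rw [continuousOn_iff, and_assoc]
  exact and_congr_right' <| and_congr_right' <| forall₂_congr fun t _ ↦ eq_iff _ _ _

theorem continuousOn_lyapunovPerronMap [Fact (1 ≤ p)]
    (hUc : HasWeightedDecay Uc φ κc b (Icc a b)) (hUs : HasWeightedDecay Us φ κs a (Icc a b))
    (hgc : Continuous fun q : ℝ × WithLp p (Ec × Es) ↦ gc q.1 q.2)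
    (hgs : Continuous fun q : ℝ × WithLp p (Ec × Es) ↦ gs q.1 q.2) (hab : a ≤ b) (ξ : Ec)
    {v : ℝ → WithLp p (Ec × Es)} (hv : ContinuousOn v (Icc a b)) :
    ContinuousOn (lyapunovPerronMap Uc Us gc gs h a b ξ v) (Icc a b) := by
  have center : ContinuousOn (duhamel Uc b ξ fun τ ↦ gc τ (v τ)) (Icc a b) :=
    hUc.continuousOn_duhamel (fun t ht ↦ uIcc_subset_Icc (right_mem_Icc.2 hab) ht) ξ
      (hgc.comp_continuousOn (continuousOn_id.prodMk hv))
  have stable : ContinuousOn (duhamel Us a (h (v a).fst) fun τ ↦ gs τ (v τ)) (Icc a b) :=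
    hUs.continuousOn_duhamel (fun t ht ↦ uIcc_subset_Icc (left_mem_Icc.2 hab) ht) _
      (hgs.comp_continuousOn (continuousOn_id.prodMk hv))
  exact (prod_continuous_toLp p Ec Es).comp_continuousOn (center.prodMk stable)

theorem norm_lyapunovPerronMap_sub_le [Fact (1 ≤ p)]
    (hUc : HasWeightedDecay Uc φ κc b (Icc a b)) (hUs : HasWeightedDecay Us φ κs a (Icc a b))
    (hgc : Continuous fun q : ℝ × WithLp p (Ec × Es) ↦ gc q.1 q.2)
    (hgs : Continuous fun q : ℝ × WithLp p (Ec × Es) ↦ gs q.1 q.2) {L Lh : ℝ} (hL : 0 ≤ L)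
    (hgc_lip : ∀ t x y, ‖gc t x - gc t y‖ ≤ L * ‖x - y‖)
    (hgs_lip : ∀ t x y, ‖gs t x - gs t y‖ ≤ L * ‖x - y‖) (hLh : 0 ≤ Lh)
    (hh_lip : ∀ x y, ‖h x - h y‖ ≤ Lh * ‖x - y‖) (ξ : Ec) {u v : ℝ → WithLp p (Ec × Es)}
    (hu : ContinuousOn u (Icc a b)) (hv : ContinuousOn v (Icc a b)) {d : ℝ}
    (huv : ∀ t ∈ Icc a b, ‖u t - v t‖ ≤ d * Real.exp (φ t)) {t : ℝ} (ht : t ∈ Icc a b) :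
    ‖lyapunovPerronMap Uc Us gc gs h a b ξ u t - lyapunovPerronMap Uc Us gc gs h a b ξ v t‖ ≤
      (L * (1 / |κs| + 1 / |κc|) + Lh) * d * Real.exp (φ t) := by
  have a_mem : a ∈ Icc a b := left_mem_Icc.2 (ht.1.trans ht.2)
  have subset_c : uIcc b t ⊆ Icc a b := uIcc_subset_Icc (right_mem_Icc.2 (ht.1.trans ht.2)) ht
  have subset_s : uIcc a t ⊆ Icc a b := uIcc_subset_Icc a_mem ht
  have mul_bound {C r : ℝ} (hC : 0 ≤ C) {τ : ℝ} (hτ : τ ∈ Icc a b) (hr : r ≤ C * ‖u τ - v τ‖) :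
      r ≤ C * d * Real.exp (φ τ) := by
    rw [mul_assoc]
    exact hr.trans (mul_le_mul_of_nonneg_left (huv τ hτ) hC)
  have cont_gc {w : ℝ → WithLp p (Ec × Es)} (hw : ContinuousOn w (Icc a b)) :
      ContinuousOn (fun τ ↦ gc τ (w τ)) (uIcc b t) :=
    hgc.comp_continuousOn (continuousOn_id.prodMk (hw.mono subset_c))
  have cont_gs {w : ℝ → WithLp p (Ec × Es)} (hw : ContinuousOn w (Icc a b)) :
      ContinuousOn (fun τ ↦ gs τ (w τ)) (uIcc a t) :=
    hgs.comp_continuousOn (continuousOn_id.prodMk (hw.mono subset_s))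
  have initial : ‖h (u a).fst - h (v a).fst‖ ≤ Lh * d * Real.exp (φ a) :=
    mul_bound hLh a_mem ((hh_lip _ _).trans
      (mul_le_mul_of_nonneg_left (WithLp.norm_fst_le _ (u a - v a)) hLh))
  have center : ‖duhamel Uc b ξ (fun τ ↦ gc τ (u τ)) t - duhamel Uc b ξ (fun τ ↦ gc τ (v τ)) t‖ ≤
      (0 + L * d / |κc|) * Real.exp (φ t) := by
    rw [hUc.duhamel_sub ht _ _ (cont_gc hu) (cont_gc hv)]
    exact hUc.norm_duhamel_le ht (by simp)
      fun τ hτ ↦ mul_bound hL (subset_c hτ) (hgc_lip _ _ _)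
  have stable : ‖duhamel Us a (h (u a).fst) (fun τ ↦ gs τ (u τ)) t -
      duhamel Us a (h (v a).fst) (fun τ ↦ gs τ (v τ)) t‖ ≤
      (Lh * d + L * d / |κs|) * Real.exp (φ t) := by
    rw [hUs.duhamel_sub ht _ _ (cont_gs hu) (cont_gs hv)]
    exact hUs.norm_duhamel_le ht initial
      fun τ hτ ↦ mul_bound hL (subset_s hτ) (hgs_lip _ _ _)
  calc _ ≤ (0 + L * d / |κc|) * Real.exp (φ t) + (Lh * d + L * d / |κs|) * Real.exp (φ t) :=
        (norm_le_norm_fst_add_norm_snd _).trans (add_le_add center stable)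
    _ = (L * (1 / |κs| + 1 / |κc|) + Lh) * d * Real.exp (φ t) := by ring

theorem exists_isMildSolution_eqOn [Fact (1 ≤ p)] [CompleteSpace Ec] [CompleteSpace Es]
    (hUc : HasWeightedDecay Uc φ κc b (Icc a b)) (hUs : HasWeightedDecay Us φ κs a (Icc a b))
    (hφ : ContinuousOn φ (Icc a b)) (hab : a ≤ b)
    (hgc : Continuous fun q : ℝ × WithLp p (Ec × Es) ↦ gc q.1 q.2)
    (hgs : Continuous fun q : ℝ × WithLp p (Ec × Es) ↦ gs q.1 q.2) {L Lh : ℝ} (hL : 0 ≤ L)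
    (hgc_lip : ∀ t x y, ‖gc t x - gc t y‖ ≤ L * ‖x - y‖)
    (hgs_lip : ∀ t x y, ‖gs t x - gs t y‖ ≤ L * ‖x - y‖) (hLh : 0 ≤ Lh)
    (hh_lip : ∀ x y, ‖h x - h y‖ ≤ Lh * ‖x - y‖)
    (hsmall : L * (1 / |κs| + 1 / |κc|) + Lh < 1) (ξ : Ec) :
    ∃ vc vs, IsMildSolution Uc Us gc gs h a b ξ vc vs ∧
      ∀ wc ws, IsMildSolution Uc Us gc gs h a b ξ wc ws →
        EqOn vc wc (Icc a b) ∧ EqOn vs ws (Icc a b) := by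
  obtain ⟨v, hv, hv_fixed, hv_unique⟩ := exists_eqOn_fixedPoint_of_weighted_contraction
    (K := ⟨L * (1 / |κs| + 1 / |κc|) + Lh, by positivity⟩) isCompact_Icc
    (Real.continuous_exp.comp_continuousOn hφ) (fun t _ ↦ Real.exp_pos (φ t)) hsmall
    (fun u hu ↦ continuousOn_lyapunovPerronMap (h := h) hUc hUs hgc hgs hab ξ hu)
    (fun u v d hu hv huv t ht ↦ norm_lyapunovPerronMap_sub_le hUc hUs hgc hgs hL hgc_lip hgs_lip
      hLh hh_lip ξ hu hv huv ht)
  refine ⟨fun t ↦ (v t).fst, fun t ↦ (v t).snd,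
    isMildSolution_iff_eqOn_lyapunovPerronMap.2 ⟨hv, hv_fixed⟩, fun wc ws hw ↦ ?_⟩
  obtain ⟨hw_cont, hw_fixed⟩ := isMildSolution_iff_eqOn_lyapunovPerronMap
    (v := fun t ↦ toLp p (wc t, ws t)).1 hw
  have heq := hv_unique _ hw_cont hw_fixed
  exact ⟨fun t ht ↦ congrArg WithLp.fst (heq ht), fun t ht ↦ congrArg WithLp.snd (heq ht)⟩

end LyapunovPerron

section Propagator

theorem continuousOn_uncurry_clm_of_norm_le {X E F : Type*} [TopologicalSpace X]
    [NormedAddCommGroup E] [NormedSpace ℝ E] [NormedAddCommGroup F] [NormedSpace ℝ F]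
    {S : X → E →L[ℝ] F} {J : Set X} (hS : ∀ x, ContinuousOn (fun r ↦ S r x) J) {C : X → ℝ}
    (hC : ContinuousOn C J) (hC_pos : ∀ r ∈ J, 0 < C r)
    (hSC : ∀ r ∈ J, ∀ x, ‖S r x‖ ≤ C r * ‖x‖) :
    ContinuousOn (fun q : X × E ↦ S q.1 q.2) (J ×ˢ univ) := by
  have hC_fst : ContinuousOn (fun q : X × E ↦ C q.1) (J ×ˢ univ) :=
    hC.comp continuousOn_fst fun _ hq ↦ hq.1
  have normalized : ContinuousOn (fun q : X × E ↦ (C q.1)⁻¹ • S q.1 q.2) (J ×ˢ univ) := by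
    refine continuousOn_prod_of_continuousOn_lipschitzOnWith' _ 1 (fun r hr ↦ ?_)
      fun x _ ↦ (hC.inv₀ fun r hr ↦ (hC_pos r hr).ne').smul (hS x)
    refine LipschitzOnWith.of_dist_le_mul fun x _ y _ ↦ ?_
    rw [dist_eq_norm, dist_eq_norm, ← smul_sub, ← map_sub, norm_smul, norm_inv,
      Real.norm_of_nonneg (hC_pos r hr).le, NNReal.coe_one, one_mul]
    exact inv_mul_le_of_le_mul₀ (hC_pos r hr).le (norm_nonneg _) (hSC r hr _)
  exact (hC_fst.smul normalized).congr fun q hq ↦ (smul_inv_smul₀ (hC_pos _ hq.1).ne' _).symm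

variable {E : Type*} [NormedAddCommGroup E] [NormedSpace ℝ E] {z : ℝ → ℝ}

/-- The propagator `e^{∫_τ^t z} S(t - τ)` of the equation `x' = A x + z(t) x`, where `S` is the
semigroup generated by `A`. -/
noncomputable def propagator (z : ℝ → ℝ) (S : ℝ → E →L[ℝ] E) (t τ : ℝ) : E →L[ℝ] E :=
  Real.exp (∫ r in τ..t, z r) • S (t - τ)

/-- The exponent `η t + ∫_0^t z` of the weight with respect to which solutions are measured. -/
noncomputable def growthExponent (z : ℝ → ℝ) (η t : ℝ) : ℝ :=
  η * t + ∫ r in (0 : ℝ)..t, z r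

theorem continuous_growthExponent (hz : ∀ a b, IntervalIntegrable z volume a b) (η : ℝ) :
    Continuous (growthExponent z η) :=
  (continuous_const_mul η).add (intervalIntegral.continuous_primitive hz 0)

theorem hasWeightedDecay_propagator (hz : ∀ a b, IntervalIntegrable z volume a b)
    {S : ℝ → E →L[ℝ] E} {J : Set ℝ} (hS : ∀ x, ContinuousOn (fun r ↦ S r x) J) {γ : ℝ}
    (hS_norm : ∀ r ∈ J, ∀ x, ‖S r x‖ ≤ Real.exp (-γ * r) * ‖x‖) {η t₀ : ℝ} {s : Set ℝ}
    (hJ : ∀ t ∈ s, ∀ τ ∈ uIcc t₀ t, t - τ ∈ J) (hγη : γ + η ≠ 0)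
    (hs : ∀ t ∈ s, 0 ≤ (γ + η) * (t - t₀)) :
    HasWeightedDecay (propagator z S) (growthExponent z η) (γ + η) t₀ s where
  rate_ne_zero := hγη
  rate_mul_nonneg := hs
  continuousOn := by
    have hS_uncurry := continuousOn_uncurry_clm_of_norm_le hS (by fun_prop)
      (fun r _ ↦ Real.exp_pos (-γ * r)) hS_norm
    have exp_cont : Continuous fun q : (ℝ × ℝ) × E ↦ Real.exp (∫ r in q.1.2..q.1.1, z r) :=
      Real.continuous_exp.comp ((continuous_intervalIntegral_pair hz).comp continuous_fst)
    exact exp_cont.continuousOn.smul <| hS_uncurry.comp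
      (f := fun q : (ℝ × ℝ) × E ↦ (q.1.1 - q.1.2, q.2)) (by fun_prop)
      fun q hq ↦ ⟨hJ _ hq.1 _ hq.2, mem_univ _⟩
  norm_apply_le t ht τ hτ y := by
    have exponent_eq : (γ + η) * (τ - t) + growthExponent z η t - growthExponent z η τ =
        (∫ r in τ..t, z r) + -γ * (t - τ) := by
      rw [growthExponent, growthExponent,
        ← intervalIntegral.integral_interval_sub_left (hz 0 t) (hz 0 τ)]
      ring
    rw [exponent_eq, Real.exp_add, mul_assoc, propagator, smul_apply,
      norm_smul, Real.norm_of_nonneg (Real.exp_pos _).le]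
    gcongr
    exact hS_norm _ (hJ t ht τ hτ) y

end Propagator

theorem stmt_13_general {p : ℝ≥0∞} [Fact (1 ≤ p)] {Ec Es : Type*}
    [NormedAddCommGroup Ec] [NormedSpace ℝ Ec] [CompleteSpace Ec]
    [NormedAddCommGroup Es] [NormedSpace ℝ Es] [CompleteSpace Es]
    {α β η : ℝ} (hβη : -β < η) (hηα : η < -α)
    {Sc : ℝ → Ec →L[ℝ] Ec} (hSc : ∀ x, ContinuousOn (fun t ↦ Sc t x) (Iic 0))
    (hSc_norm : ∀ t ≤ 0, ∀ x, ‖Sc t x‖ ≤ Real.exp (-α * t) * ‖x‖)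
    {Ss : ℝ → Es →L[ℝ] Es} (hSs : ∀ x, ContinuousOn (fun t ↦ Ss t x) (Ici 0))
    (hSs_norm : ∀ t, 0 ≤ t → ∀ x, ‖Ss t x‖ ≤ Real.exp (-β * t) * ‖x‖)
    {z : ℝ → ℝ} (hz : ∀ a b, IntervalIntegrable z volume a b)
    {gc : ℝ → WithLp p (Ec × Es) → Ec} {gs : ℝ → WithLp p (Ec × Es) → Es}
    (hgc : Continuous fun q : ℝ × WithLp p (Ec × Es) ↦ gc q.1 q.2)
    (hgs : Continuous fun q : ℝ × WithLp p (Ec × Es) ↦ gs q.1 q.2) {L : ℝ} (hL : 0 ≤ L)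
    (hgc_lip : ∀ t x y, ‖gc t x - gc t y‖ ≤ L * ‖x - y‖)
    (hgs_lip : ∀ t x y, ‖gs t x - gs t y‖ ≤ L * ‖x - y‖)
    {Lh : ℝ} (hLh : 0 ≤ Lh) {h : Ec → Es} (hh_lip : ∀ x y, ‖h x - h y‖ ≤ Lh * ‖x - y‖)
    (hsmall : L * (1 / (η + β) - 1 / (α + η)) + Lh < 1) {a b : ℝ} (hab : a ≤ b) (ξ : Ec) :
    ∃ vc vs, IsMildSolution (propagator z Sc) (propagator z Ss) gc gs h a b ξ vc vs ∧
      ∀ wc ws, IsMildSolution (propagator z Sc) (propagator z Ss) gc gs h a b ξ wc ws →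
        EqOn vc wc (Icc a b) ∧ EqOn vs ws (Icc a b) := by
  have center_rate : α + η < 0 := by linarith
  have stable_rate : 0 < β + η := by linarith
  have center : HasWeightedDecay (propagator z Sc) (growthExponent z η) (α + η) b (Icc a b) :=
    hasWeightedDecay_propagator hz hSc hSc_norm
      (fun t ht τ hτ ↦ sub_nonpos.2 (uIcc_of_ge ht.2 ▸ hτ).1) center_rate.ne
      fun t ht ↦ mul_nonneg_of_nonpos_of_nonpos center_rate.le (sub_nonpos.2 ht.2)
  have stable : HasWeightedDecay (propagator z Ss) (growthExponent z η) (β + η) a (Icc a b) :=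
    hasWeightedDecay_propagator hz hSs hSs_norm
      (fun t ht τ hτ ↦ sub_nonneg.2 (uIcc_of_le ht.1 ▸ hτ).2) stable_rate.ne'
      fun t ht ↦ mul_nonneg stable_rate.le (sub_nonneg.2 ht.1)
  have hsmall' : L * (1 / |β + η| + 1 / |α + η|) + Lh < 1 := by
    rwa [abs_of_pos stable_rate, abs_of_neg center_rate, one_div_neg_eq_neg_one_div,
      ← sub_eq_add_neg, add_comm β]
  exact exists_isMildSolution_eqOn center stable (continuous_growthExponent hz η).continuousOn hab
    hgc hgs hL hgc_lip hgs_lip hLh hh_lip hsmall' ξ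

/-- Backward solvability, on any finite time interval `[0, T_f]`, of the system
restricted to the Lipschitz manifold given as the graph of `h`, with the center
component prescribed at the final time `T_f`. -/
theorem stmt_13
    {Hc Hs : Type*}
    [NormedAddCommGroup Hc] [InnerProductSpace ℝ Hc] [CompleteSpace Hc]
    [TopologicalSpace.SeparableSpace Hc]
    [NormedAddCommGroup Hs] [InnerProductSpace ℝ Hs] [CompleteSpace Hs]
    [TopologicalSpace.SeparableSpace Hs]
    (α β η : ℝ) (hα : 0 ≤ α) (hαβ : α < β) (hη1 : -β < η) (hη2 : η < -α)
    (Sc : ℝ → Hc →L[ℝ] Hc)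
    (hSc0 : Sc 0 = ContinuousLinearMap.id ℝ Hc)
    (hScgrp : ∀ s t : ℝ, Sc (s + t) = (Sc s).comp (Sc t))
    (hSccont : ∀ x : Hc, Continuous fun t => Sc t x)
    (hScbnd : ∀ t : ℝ, t ≤ 0 → ∀ x : Hc, ‖Sc t x‖ ≤ Real.exp (-α * t) * ‖x‖)
    (Ss : ℝ → Hs →L[ℝ] Hs)
    (hSs0 : Ss 0 = ContinuousLinearMap.id ℝ Hs)
    (hSsgrp : ∀ s t : ℝ, 0 ≤ s → 0 ≤ t → Ss (s + t) = (Ss s).comp (Ss t))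
    (hSscont : ∀ x : Hs, ContinuousOn (fun t => Ss t x) (Ici 0))
    (hSsbnd : ∀ t : ℝ, 0 ≤ t → ∀ x : Hs, ‖Ss t x‖ ≤ Real.exp (-β * t) * ‖x‖)
    (z : ℝ → ℝ) (hz : Continuous z)
    (L : ℝ) (hL : 0 ≤ L)
    (gc : ℝ → WithLp 2 (Hc × Hs) → Hc)
    (gs : ℝ → WithLp 2 (Hc × Hs) → Hs)
    (hgcCont : Continuous fun p : ℝ × WithLp 2 (Hc × Hs) => gc p.1 p.2)
    (hgsCont : Continuous fun p : ℝ × WithLp 2 (Hc × Hs) => gs p.1 p.2)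
    (hgc0 : ∀ t : ℝ, gc t 0 = 0) (hgs0 : ∀ t : ℝ, gs t 0 = 0)
    (hgcLip : ∀ (t : ℝ) (x y : WithLp 2 (Hc × Hs)), ‖gc t x - gc t y‖ ≤ L * ‖x - y‖)
    (hgsLip : ∀ (t : ℝ) (x y : WithLp 2 (Hc × Hs)), ‖gs t x - gs t y‖ ≤ L * ‖x - y‖)
    -- the manifold map and its Lipschitz constant
    (Lh : ℝ) (hLh : 0 ≤ Lh) (h : Hc → Hs)
    (hhLip : ∀ x y : Hc, ‖h x - h y‖ ≤ Lh * ‖x - y‖)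
    -- smallness condition
    (hsmall : L * (1 / (η + β) - 1 / (α + η)) + Lh < 1) :
    ∀ Tf : ℝ, 0 < Tf → ∀ ξ : Hc,
      ∃ (vc : ℝ → Hc) (vs : ℝ → Hs),
        (ContinuousOn vc (Icc 0 Tf) ∧ ContinuousOn vs (Icc 0 Tf) ∧
          ∀ t ∈ Icc (0:ℝ) Tf,
            vc t = Real.exp (∫ s in Tf..t, z s) • Sc (t - Tf) ξ +
                ∫ τ in Tf..t, Real.exp (∫ s in τ..t, z s) •
                  Sc (t - τ) (gc τ ((WithLp.equiv 2 (Hc × Hs)).symm (vc τ, vs τ))) ∧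
            vs t = Real.exp (∫ s in (0:ℝ)..t, z s) • Ss t (h (vc 0)) +
                ∫ τ in (0:ℝ)..t, Real.exp (∫ s in τ..t, z s) •
                  Ss (t - τ) (gs τ ((WithLp.equiv 2 (Hc × Hs)).symm (vc τ, vs τ)))) ∧
        -- uniqueness on `[0, T_f]`
        (∀ (wc : ℝ → Hc) (ws : ℝ → Hs),
          (ContinuousOn wc (Icc 0 Tf) ∧ ContinuousOn ws (Icc 0 Tf) ∧
            ∀ t ∈ Icc (0:ℝ) Tf,
              wc t = Real.exp (∫ s in Tf..t, z s) • Sc (t - Tf) ξ +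
                  ∫ τ in Tf..t, Real.exp (∫ s in τ..t, z s) •
                    Sc (t - τ) (gc τ ((WithLp.equiv 2 (Hc × Hs)).symm (wc τ, ws τ))) ∧
              ws t = Real.exp (∫ s in (0:ℝ)..t, z s) • Ss t (h (wc 0)) +
                  ∫ τ in (0:ℝ)..t, Real.exp (∫ s in τ..t, z s) •
                    Ss (t - τ) (gs τ ((WithLp.equiv 2 (Hc × Hs)).symm (wc τ, ws τ)))) →
          EqOn vc wc (Icc 0 Tf) ∧ EqOn vs ws (Icc 0 Tf)) := by
  intro Tf hT ξ
  simpa only [IsMildSolution, duhamel, propagator, smul_apply, WithLp.equiv_symm_apply, sub_zero]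
    using stmt_13_general hη1 hη2 (fun x ↦ (hSccont x).continuousOn) hScbnd hSscont hSsbnd
      (fun a b ↦ hz.intervalIntegrable a b) hgcCont hgsCont hL hgcLip hgsLip hLh hhLip hsmall
      hT.le ξ
end
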